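/- arXiv:2401.12712 — 8 statements merged into one kernel-verified Lean document; each statement's English description precedes it below -/
import Mathlib

section
/- Fix λ_2,…,λ_n ∈ ℝ and let u be a smooth real-valued function on a neighborhood of 0 ∈ ℝ with u(0)=0 satisfying u(x_1) = f(x_1, λ_2 u(x_1), …, λ_n u(x_1)) for all x_1 near 0. Then u'(0)=0 and the Taylor coefficients a_2, a_3, a_4 of u at 0 (so u(x_1) = a_2 x_1² + a_3 x_1³ + a_4 x_1⁴ + O(x_1⁵)) are a_2 = ε_1/2, a_3 = (1/3)K_{111}, and a_4 = (1/12)H_{1111} + (ε_1/2)Σ_{σ=2}^n K_{11σ} λ_σ + (1/8)Σ_{σ=2}^n ε_σ λ_σ². -/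
/-!
Near `0` the function `u` is `f ∘ γ` with `γ t = t e + u(t) Λ`, where `e` is the first basis vector
and `Λ = (0, λ₂, …, λₙ)`.  For fixed vectors `v`, the chain rule reads
`(D^k f(γ) v)' = D^{k+1} f(γ) (e, v) + u' D^{k+1} f(γ) (Λ, v)` (`hasDerivAt_iteratedFDeriv_path`),
so differentiating `u = f ∘ γ` four times only needs the scalar product rule.  At `0` one has
`Df = 0`, hence `u' = 0`, and `D²f(e, Λ) = 0`, which leaves `u'' = D²f(e,e)`, `u''' = D³f(e,e,e)` and
`u'''' = D⁴f(e,e,e,e) + 6 u'' D³f(e,e,Λ) + 3 u''² D²f(Λ,Λ)`.  Expanding `Λ` in the standard basis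
(`multilinear_tiltDir`) and using `ε₁² = 1` gives the coefficients.
-/

open Filter Topology

/-- The `i`-th standard basis vector of `ℝⁿ`. -/
noncomputable def stdBasis (n : ℕ) (i : Fin n) : Fin n → ℝ := Pi.single i 1

/-- The direction `Λ = (0, λ₂, …, λₙ)`: the cutting 2-plane is spanned by the first basis vector
of `ℝⁿ⁺¹` and `(Λ, 1)`. -/
noncomputable def tiltDir {n : ℕ} [NeZero n] (lam : Fin n → ℝ) : Fin n → ℝ :=
  fun i => if i = 0 then 0 else lam i

lemma tiltDir_eq_sum {n : ℕ} [NeZero n] (lam : Fin n → ℝ) :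
    tiltDir lam = ∑ σ ∈ Finset.univ.erase (0 : Fin n), lam σ • stdBasis n σ := by
  ext i
  simp only [tiltDir, stdBasis, Finset.sum_apply, Pi.smul_apply, Pi.single_apply, smul_eq_mul,
    mul_ite, mul_one, mul_zero, Finset.sum_ite_eq, Finset.mem_erase, Finset.mem_univ, and_true]
  by_cases h : i = 0 <;> simp [h]

/-- Expansion of `Λ` in the `i`-th slot of a multilinear form; the tuple is given as a function `w`
of its `i`-th entry, so that it can be written in explicit `![…]` form. -/
lemma multilinear_tiltDir {n k : ℕ} [NeZero n] (lam : Fin n → ℝ)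
    (M : ContinuousMultilinearMap ℝ (fun _ : Fin k => Fin n → ℝ) ℝ)
    (w : (Fin n → ℝ) → Fin k → Fin n → ℝ) (i : Fin k)
    (hw : ∀ x, w x = Function.update (w 0) i x) :
    M (w (tiltDir lam)) =
      ∑ σ ∈ Finset.univ.erase (0 : Fin n), lam σ * M (w (stdBasis n σ)) := by
  rw [hw, tiltDir_eq_sum, ← ContinuousMultilinearMap.coe_coe, MultilinearMap.map_update_sum]
  refine Finset.sum_congr rfl fun σ _ => ?_
  rw [MultilinearMap.map_update_smul, ← hw, smul_eq_mul]

/-- Chain rule along a path with velocity `e + p Λ`, for a derivative of `f` applied to fixed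
vectors. -/
lemma hasDerivAt_iteratedFDeriv_path {n k : ℕ} {f : (Fin n → ℝ) → ℝ}
    (hf : ContDiff ℝ (⊤ : ℕ∞) f) {γ : ℝ → Fin n → ℝ} {e Λ : Fin n → ℝ} {p t : ℝ}
    (hγ : HasDerivAt γ (e + p • Λ) t) (v : Fin k → Fin n → ℝ) :
    HasDerivAt (fun t => iteratedFDeriv ℝ k f (γ t) v)
      (iteratedFDeriv ℝ (k + 1) f (γ t) (Matrix.vecCons e v)
        + p * iteratedFDeriv ℝ (k + 1) f (γ t) (Matrix.vecCons Λ v)) t := by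
  have hd : DifferentiableAt ℝ (iteratedFDeriv ℝ k f) (γ t) :=
    (hf.differentiable_iteratedFDeriv (by exact_mod_cast WithTop.coe_lt_top k)) _
  have h1 := hd.hasFDerivAt.comp_hasDerivAt t hγ
  have h2 := ((ContinuousMultilinearMap.apply ℝ (fun _ : Fin k => Fin n → ℝ) ℝ
    v).hasFDerivAt).comp_hasDerivAt t h1
  refine h2.congr_deriv ?_
  simp [iteratedFDeriv_succ_apply_left, Matrix.vecCons]

/-- Equality of two germs passes to the derivatives. -/
lemma eventuallyEq_of_hasDerivAt {g h g' h' : ℝ → ℝ} (hgh : g =ᶠ[𝓝 0] h)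
    (hg : ∀ᶠ t in 𝓝 (0 : ℝ), HasDerivAt g (g' t) t)
    (hh : ∀ᶠ t in 𝓝 (0 : ℝ), HasDerivAt h (h' t) t) : g' =ᶠ[𝓝 0] h' := by
  filter_upwards [hgh.eventually_nhds, hg, hh] with t h1 h2 h3
  exact h2.unique (h3.congr_of_eventuallyEq h1)

lemma eventually_hasDerivAt_iteratedDeriv {u : ℝ → ℝ} (hu : ContDiffAt ℝ (⊤ : ℕ∞) u 0) (k : ℕ) :
    ∀ᶠ t in 𝓝 (0 : ℝ), HasDerivAt (iteratedDeriv k u) (iteratedDeriv (k + 1) u t) t := by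
  have h : ContDiffAt ℝ ((k + 1 : ℕ) : WithTop ℕ∞) u 0 := hu.of_le (by exact_mod_cast le_top)
  filter_upwards [h.eventually (by simp)] with t ht
  rw [iteratedDeriv_succ]
  refine DifferentiableAt.hasDerivAt ?_
  rw [iteratedDeriv_eq_equiv_comp]
  have := ht.differentiableAt_iteratedFDeriv (m := k) (by exact_mod_cast Nat.lt_succ_self k)
  exact (LinearIsometryEquiv.differentiable _).differentiableAt.comp t this

/-- The section of the hypersurface `x_{n+1} = f(x)` by the 2-plane
`{x_σ = λ_σ x_{n+1}, σ = 2,…,n}`, viewed as the graph `x_{n+1} = u(x_1)`, has Taylor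
coefficients `a₂ = ε₁/2`, `a₃ = K₁₁₁/3`,
`a₄ = H₁₁₁₁/12 + (ε₁/2) Σ_{σ≥2} K₁₁σ λ_σ + (1/8) Σ_{σ≥2} ε_σ λ_σ²`. -/
theorem statement0 (n : ℕ) [NeZero n] (hn : 2 ≤ n)
    (ε : Fin n → ℝ) (hε : ∀ i, ε i = 1 ∨ ε i = -1)
    (K : Fin n → Fin n → Fin n → ℝ)
    (hKsym₁ : ∀ i j k, K i j k = K j i k)
    (hKsym₂ : ∀ i j k, K i j k = K i k j)
    (H : Fin n → Fin n → Fin n → Fin n → ℝ)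
    (hHsym₁ : ∀ i j k l, H i j k l = H j i k l)
    (hHsym₂ : ∀ i j k l, H i j k l = H i k j l)
    (hHsym₃ : ∀ i j k l, H i j k l = H i j l k)
    (f : (Fin n → ℝ) → ℝ)
    (hf : ContDiff ℝ (⊤ : ℕ∞) f) (hf0 : f 0 = 0) (hdf : fderiv ℝ f 0 = 0)
    (hf2 : ∀ i j, iteratedFDeriv ℝ 2 f 0 ![stdBasis n i, stdBasis n j]
      = if i = j then ε i else 0)
    (hf3 : ∀ i j k, iteratedFDeriv ℝ 3 f 0 ![stdBasis n i, stdBasis n j, stdBasis n k]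
      = 2 * K i j k)
    (hf4 : ∀ i j k l,
      iteratedFDeriv ℝ 4 f 0 ![stdBasis n i, stdBasis n j, stdBasis n k, stdBasis n l]
      = 2 * H i j k l)
    (lam : Fin n → ℝ)
    (u : ℝ → ℝ) (hu : ContDiffAt ℝ (⊤ : ℕ∞) u 0) (hu0 : u 0 = 0)
    (huf : ∀ᶠ t in 𝓝 (0 : ℝ), u t = f (fun i => if i = 0 then t else lam i * u t)) :
    deriv u 0 = 0 ∧
    iteratedDeriv 2 u 0 / 2 = ε 0 / 2 ∧
    iteratedDeriv 3 u 0 / 6 = (1 / 3) * K 0 0 0 ∧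
    iteratedDeriv 4 u 0 / 24 =
      (1 / 12) * H 0 0 0 0
        + (ε 0 / 2) * ∑ σ ∈ Finset.univ.erase (0 : Fin n), K 0 0 σ * lam σ
        + (1 / 8) * ∑ σ ∈ Finset.univ.erase (0 : Fin n), ε σ * (lam σ) ^ 2 := by
  classical
  set γ : ℝ → Fin n → ℝ := fun t i => if i = 0 then t else lam i * u t with hγdef
  set e := stdBasis n 0 with he
  set Λ := tiltDir lam with hΛ
  have hγ0 : γ 0 = 0 := by ext i; simp [hγdef, hu0]
  have hU := eventually_hasDerivAt_iteratedDeriv hu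
  obtain ⟨p, hp⟩ : ∃ p, p = iteratedDeriv 1 u := ⟨_, rfl⟩
  obtain ⟨q, hq⟩ : ∃ q, q = iteratedDeriv 2 u := ⟨_, rfl⟩
  obtain ⟨r, hr⟩ : ∃ r, r = iteratedDeriv 3 u := ⟨_, rfl⟩
  obtain ⟨s, hs⟩ : ∃ s, s = iteratedDeriv 4 u := ⟨_, rfl⟩
  have hU0 : ∀ᶠ t in 𝓝 (0 : ℝ), HasDerivAt u (p t) t := by
    simpa only [hp, iteratedDeriv_zero] using hU 0
  have hU1 : ∀ᶠ t in 𝓝 (0 : ℝ), HasDerivAt p (q t) t := by rw [hp, hq]; exact hU 1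
  have hU2 : ∀ᶠ t in 𝓝 (0 : ℝ), HasDerivAt q (r t) t := by rw [hq, hr]; exact hU 2
  have hU3 : ∀ᶠ t in 𝓝 (0 : ℝ), HasDerivAt r (s t) t := by rw [hr, hs]; exact hU 3
  have hγ : ∀ᶠ t in 𝓝 (0 : ℝ), HasDerivAt γ (e + p t • Λ) t := by
    filter_upwards [hU0] with t ht
    rw [hasDerivAt_pi]
    intro i
    by_cases hi : i = 0
    · subst hi
      simpa [hγdef, he, hΛ, stdBasis, tiltDir] using hasDerivAt_id' t
    · simpa [hγdef, he, hΛ, stdBasis, tiltDir, hi, mul_comm] using ht.const_mul (lam i)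
  -- `D w t` is the derivative of `f` at `γ t` applied to the fixed vectors `w`.
  let D : {k : ℕ} → (Fin k → Fin n → ℝ) → ℝ → ℝ := fun {k} w t => iteratedFDeriv ℝ k f (γ t) w
  have hD : ∀ᶠ t in 𝓝 (0 : ℝ), ∀ (k : ℕ) (w : Fin k → Fin n → ℝ), HasDerivAt (D w)
      (D (Matrix.vecCons e w) t + p t * D (Matrix.vecCons Λ w) t) t := by
    filter_upwards [hγ] with t ht k w
    exact hasDerivAt_iteratedFDeriv_path hf ht w
  have E0 : u =ᶠ[𝓝 0] D ![] := by
    filter_upwards [huf] with t ht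
    simpa [D] using ht
  have E1 : p =ᶠ[𝓝 0] fun t => D ![e] t + p t * D ![Λ] t :=
    eventuallyEq_of_hasDerivAt E0 hU0 (hD.mono fun t h => h 0 ![])
  have E2 : q =ᶠ[𝓝 0] fun t => D ![e, e] t + p t * D ![Λ, e] t + q t * D ![Λ] t
      + p t * D ![e, Λ] t + p t ^ 2 * D ![Λ, Λ] t := by
    refine eventuallyEq_of_hasDerivAt E1 hU1 ?_
    filter_upwards [hD, hU1] with t h hp'
    refine ((h _ ![e]).add (hp'.mul (h _ ![Λ]))).congr_deriv ?_
    ring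
  have E3 : r =ᶠ[𝓝 0] fun t => D ![e, e, e] t + p t * D ![Λ, e, e] t
      + q t * D ![Λ, e] t + p t * (D ![e, Λ, e] t + p t * D ![Λ, Λ, e] t)
      + r t * D ![Λ] t + q t * (D ![e, Λ] t + p t * D ![Λ, Λ] t)
      + q t * D ![e, Λ] t + p t * (D ![e, e, Λ] t + p t * D ![Λ, e, Λ] t)
      + 2 * (p t * q t) * D ![Λ, Λ] t
      + p t ^ 2 * (D ![e, Λ, Λ] t + p t * D ![Λ, Λ, Λ] t) := by
    refine eventuallyEq_of_hasDerivAt E2 hU2 ?_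
    filter_upwards [hD, hU1, hU2] with t h hp' hq'
    refine (((((h _ ![e, e]).add (hp'.mul (h _ ![Λ, e]))).add (hq'.mul (h _ ![Λ]))).add
      (hp'.mul (h _ ![e, Λ]))).add ((hp'.pow 2).mul (h _ ![Λ, Λ]))).congr_deriv ?_
    simp only [Pi.pow_apply]
    push_cast
    ring
  have hD1 : ∀ w : Fin n → ℝ, D ![w] 0 = 0 := by
    intro w
    simp [D, hγ0, iteratedFDeriv_one_apply, hdf]
  have hp0 : p 0 = 0 := by simpa [hD1] using E1.eq_of_nhds
  have hee : D ![e, e] 0 = ε 0 := by simp [D, hγ0, he, hf2]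
  have heL : D ![e, Λ] 0 = 0 := by
    have h := multilinear_tiltDir lam (iteratedFDeriv ℝ 2 f 0) (fun x => ![e, x]) 1
      (fun x => by ext j; fin_cases j <;> rfl)
    simp only [he, hf2] at h
    simp only [D, hγ0]
    refine h.trans ?_
    refine Finset.sum_eq_zero fun σ hσ => ?_
    rw [if_neg (Finset.ne_of_mem_erase hσ).symm, mul_zero]
  have hLv : ∀ τ, iteratedFDeriv ℝ 2 f 0 ![Λ, stdBasis n τ] = if τ = 0 then 0 else lam τ * ε τ := by
    intro τ
    have h := multilinear_tiltDir lam (iteratedFDeriv ℝ 2 f 0) (fun x => ![x, stdBasis n τ]) 0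
      (fun x => by ext j; fin_cases j <;> rfl)
    simp only [h, hf2, hΛ, mul_ite, mul_zero, Finset.sum_ite_eq', Finset.mem_erase,
      Finset.mem_univ, and_true]
    by_cases hτ : τ = 0 <;> simp [hτ]
  have hLe : D ![Λ, e] 0 = 0 := by simp [D, hγ0, he, hLv]
  have hLL : D ![Λ, Λ] 0 = ∑ σ ∈ Finset.univ.erase (0 : Fin n), ε σ * lam σ ^ 2 := by
    have h := multilinear_tiltDir lam (iteratedFDeriv ℝ 2 f 0) (fun x => ![Λ, x]) 1
      (fun x => by ext j; fin_cases j <;> rfl)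
    simp only [← hΛ] at h
    simp only [D, hγ0, h, hLv]
    refine Finset.sum_congr rfl fun σ hσ => ?_
    rw [if_neg (Finset.ne_of_mem_erase hσ)]
    ring
  set S := ∑ σ ∈ Finset.univ.erase (0 : Fin n), K 0 0 σ * lam σ with hS
  have heeL : D ![e, e, Λ] 0 = 2 * S := by
    have h := multilinear_tiltDir lam (iteratedFDeriv ℝ 3 f 0) (fun x => ![e, e, x]) 2
      (fun x => by ext j; fin_cases j <;> rfl)
    simp only [he, hf3] at h
    simp only [D, hγ0, hS, Finset.mul_sum]
    exact h.trans <| Finset.sum_congr rfl fun σ _ => by ring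
  have heLe : D ![e, Λ, e] 0 = 2 * S := by
    have h := multilinear_tiltDir lam (iteratedFDeriv ℝ 3 f 0) (fun x => ![e, x, e]) 1
      (fun x => by ext j; fin_cases j <;> rfl)
    simp only [he, hf3] at h
    simp only [D, hγ0, hS, Finset.mul_sum]
    exact h.trans <| Finset.sum_congr rfl fun σ _ => by rw [hKsym₂ 0 σ 0]; ring
  have hLee : D ![Λ, e, e] 0 = 2 * S := by
    have h := multilinear_tiltDir lam (iteratedFDeriv ℝ 3 f 0) (fun x => ![x, e, e]) 0
      (fun x => by ext j; fin_cases j <;> rfl)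
    simp only [he, hf3] at h
    simp only [D, hγ0, hS, Finset.mul_sum]
    exact h.trans <| Finset.sum_congr rfl fun σ _ => by rw [hKsym₁ σ 0 0, hKsym₂ 0 σ 0]; ring
  have heee : D ![e, e, e] 0 = 2 * K 0 0 0 := by simp [D, hγ0, he, hf3]
  have heeee : D ![e, e, e, e] 0 = 2 * H 0 0 0 0 := by simp [D, hγ0, he, hf4]
  have hq0 : q 0 = ε 0 := by simpa [hp0, hD1, hee] using E2.eq_of_nhds
  have hr0 : r 0 = 2 * K 0 0 0 := by simpa [hp0, hD1, heee, heL, hLe] using E3.eq_of_nhds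
  have hs0 : s 0 = 2 * H 0 0 0 0 + 12 * ε 0 * S
      + 3 * ε 0 ^ 2 * ∑ σ ∈ Finset.univ.erase (0 : Fin n), ε σ * lam σ ^ 2 := by
    have h := hD.self_of_nhds
    have hp' := hU1.self_of_nhds
    have hq' := hU2.self_of_nhds
    have hr' := hU3.self_of_nhds
    -- One product-rule term for each of the ten summands in `E3`, in the same order.
    have h4 := (((((((((h _ ![e, e, e]).add (hp'.mul (h _ ![Λ, e, e]))).add
      (hq'.mul (h _ ![Λ, e]))).add
      (hp'.mul ((h _ ![e, Λ, e]).add (hp'.mul (h _ ![Λ, Λ, e]))))).add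
      (hr'.mul (h _ ![Λ]))).add
      (hq'.mul ((h _ ![e, Λ]).add (hp'.mul (h _ ![Λ, Λ]))))).add
      (hq'.mul (h _ ![e, Λ]))).add
      (hp'.mul ((h _ ![e, e, Λ]).add (hp'.mul (h _ ![Λ, e, Λ]))))).add
      (((hp'.mul hq').const_mul 2).mul (h _ ![Λ, Λ]))).add
      ((hp'.pow 2).mul ((h _ ![e, Λ, Λ]).add (hp'.mul (h _ ![Λ, Λ, Λ]))))
    have hfin := hr'.unique (h4.congr_of_eventuallyEq E3)
    simp only [Pi.pow_apply, Pi.add_apply, Pi.mul_apply, hp0, hq0, hr0, hD1, heL, hLe, hLL,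
      heeL, heLe, hLee, heeee] at hfin
    rw [hfin]
    ring
  have hε2 : ε 0 ^ 2 = 1 := by rcases hε 0 with h | h <;> rw [h] <;> norm_num
  refine ⟨?_, ?_, ?_, ?_⟩
  · rw [← iteratedDeriv_one, ← hp, hp0]
  · rw [← hq, hq0]
  · rw [← hr, hr0]; ring
  · rw [← hs, hs0, hε2]; ring
end

section
/- Let a_2, a_3, a_4 ∈ ℝ with a_2 ≠ 0, and set p(x) = a_2 x² + a_3 x³ + a_4 x⁴. Then the polynomial q(x) = −p(x) + a_2 x² + (a_3/a_2) x·p(x) + ((a_2 a_4 − a_3²)/a_2³)·p(x)² is divisible by x⁵; that is, all coefficients of q in degrees 0 through 4 vanish. Consequently, for any smooth planar curve x_{n+1} = a_2 x_1² + a_3 x_1³ + a_4 x_1⁴ + O(x_1⁵), the conic x_{n+1} = a_2 x_1² + (a_3/a_2) x_1 x_{n+1} + ((a_2 a_4 − a_3²)/a_2³) x_{n+1}² has contact of order 4 with the curve at the origin. -/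
/-!
In both parts the conic's coefficients `m = a₃/a₂` and `k = (a₂a₄ − a₃²)/a₂³` enter only through
`m a₂ = a₃` and `m a₃ + k a₂² = a₄`, which say that the coefficients of degrees 3 and 4 vanish;
those of lower degree vanish identically. For the polynomial the quotient by `X ^ 5` is
explicit. For a smooth curve, the Leibniz rule expresses the derivatives of order at most 4 at `0`
through those of `y`, and the same two equations appear multiplied by `3!` and `4!`.
-/

open Polynomial

/-- The quartic polynomial `p(x) = a₂x² + a₃x³ + a₄x⁴`. -/
noncomputable def curvePoly (a2 a3 a4 : ℝ) : ℝ[X] :=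
  C a2 * X ^ 2 + C a3 * X ^ 3 + C a4 * X ^ 4

/-- `q(x) = −p(x) + a₂x² + (a₃/a₂)·x·p(x) + ((a₂a₄ − a₃²)/a₂³)·p(x)²`, the result of
substituting `x_{n+1} = p(x)` into the equation of the osculating conic. -/
noncomputable def conicContactPoly (a2 a3 a4 : ℝ) : ℝ[X] :=
  -curvePoly a2 a3 a4 + C a2 * X ^ 2
    + C (a3 / a2) * X * curvePoly a2 a3 a4
    + C ((a2 * a4 - a3 ^ 2) / a2 ^ 3) * (curvePoly a2 a3 a4) ^ 2

/-- the conic `x_{n+1} = a₂x₁² + (a₃/a₂)x₁x_{n+1} + ((a₂a₄−a₃²)/a₂³)x_{n+1}²`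
has contact of order 4 at the origin with any curve `x_{n+1} = a₂x₁² + a₃x₁³ + a₄x₁⁴ + O(x₁⁵)`. -/
theorem statement1 (a2 a3 a4 : ℝ) (ha2 : a2 ≠ 0) :
    (X : ℝ[X]) ^ 5 ∣ conicContactPoly a2 a3 a4 ∧
    ∀ y : ℝ → ℝ, ContDiffAt ℝ (⊤ : ℕ∞) y 0 → y 0 = 0 → deriv y 0 = 0 →
      iteratedDeriv 2 y 0 = 2 * a2 → iteratedDeriv 3 y 0 = 6 * a3 →
      iteratedDeriv 4 y 0 = 24 * a4 →
      ∀ j ≤ 4, iteratedDeriv j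
        (fun t => -(y t) + a2 * t ^ 2 + (a3 / a2) * t * y t
          + ((a2 * a4 - a3 ^ 2) / a2 ^ 3) * (y t) ^ 2) 0 = 0 := by
  -- `a₃/a₂` and `(a₂a₄ − a₃²)/a₂³` are the solutions of these two coefficient equations
  -- (degrees 3 and 4); the rest of the proof uses nothing else about them.
  have h3 : a3 / a2 * a2 = a3 := by field_simp
  have h4 : a3 / a2 * a3 + (a2 * a4 - a3 ^ 2) / a2 ^ 3 * a2 ^ 2 = a4 := by
    field_simp
    ring
  unfold conicContactPoly curvePoly
  generalize a3 / a2 = m at *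
  generalize (a2 * a4 - a3 ^ 2) / a2 ^ 3 = k at *
  constructor
  · have h3' : (C m * C a2 : ℝ[X]) = C a3 := by rw [← C_mul, h3]
    have h4' : (C m * C a3 + C k * C a2 ^ 2 : ℝ[X]) = C a4 := by
      rw [← C_pow, ← C_mul, ← C_mul, ← C_add, h4]
    refine ⟨C m * C a4 + 2 * C k * C a2 * C a3 + C k * (C a3 ^ 2 + 2 * C a2 * C a4) * X
      + 2 * C k * C a3 * C a4 * X ^ 2 + C k * C a4 ^ 2 * X ^ 3, ?_⟩
    linear_combination X ^ 3 * h3' + X ^ 4 * h4'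
  · intro y hy y0 y1 y2 y3 y4 j hj
    have hy' : ContDiffAt ℝ j y 0 := hy.of_le (by exact_mod_cast le_top)
    have hid : ContDiffAt ℝ j (fun t : ℝ => t) 0 := contDiffAt_id
    have e : (fun t => -(y t) + a2 * t ^ 2 + m * t * y t + k * (y t) ^ 2)
        = fun t => -(y t) + a2 * t ^ 2 + m * (t * y t) + k * (y t * y t) := by
      funext t
      ring
    rw [e, iteratedDeriv_fun_add (by fun_prop) (by fun_prop),
      iteratedDeriv_fun_add (by fun_prop) (by fun_prop),
      iteratedDeriv_fun_add (by fun_prop) (by fun_prop), iteratedDeriv_fun_neg,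
      iteratedDeriv_const_mul_field, iteratedDeriv_const_mul_field,
      iteratedDeriv_const_mul_field, iteratedDeriv_fun_pow_zero,
      iteratedDeriv_fun_mul hid hy', iteratedDeriv_fun_mul hy' hy']
    simp only [iteratedDeriv_fun_id_zero]
    interval_cases j <;>
      simp [Finset.sum_range_succ, Nat.choose, y0, y1, y2, y3, y4]
    · ring
    · linear_combination 6 * h3
    · linear_combination 24 * h4
end

section
/- Fix λ_2,…,λ_n ∈ ℝ and let u be a smooth real-valued function on a neighborhood of 0 ∈ ℝ with u(0)=0 satisfying u(x_1) = f(x_1, λ_2 u(x_1), …, λ_n u(x_1)) for all x_1 near 0. Then for every β ∈ ℝ the function x_1 ↦ g_β(x_1, λ_2 u(x_1), …, λ_n u(x_1), u(x_1)) vanishes together with its derivatives up to order 3 at x_1 = 0 (the conic section of Q(β) has contact of order 3 with the corresponding section of M); and for β = β* = (1/9)(3H_{1111} − 8 ε_1 K_{111}²) it vanishes together with its derivatives up to order 4 at x_1 = 0 (the section of the Moutard hyperquadric has contact of order 4). -/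
/-!
The section of the hypersurface is the curve `x(t) = t • a + u(t) • w`, with `a` the first basis
vector and `w` the transverse vector `(0, λ₂, …, λₙ)`. Since `df(0) = 0`, the equation `u = f(x)`
first gives `u = O(t²)`, and then the Taylor expansion of `f` to order four, in which every monomial
of weight at least five (`t` having weight one and `u` weight two) is absorbed in the error, gives
`u = ½ε₁t² + ½E u² + ⅓K₁₁₁t³ + S t²u + (1/12)H₁₁₁₁t⁴ + O(t⁵)`,
where `E = Σ_{σ≥2} ε_σ λ_σ²` and `S = Σ_{σ≥2} K₁₁σ λ_σ` (`section_expansion`).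

Substituting this in `g_β`, the terms in `E` and `S` cancel up to `O(t⁵)`, and
`g_β = (β/4 + (2/9)ε₁K₁₁₁² − H₁₁₁₁/12) t⁴ + O(t⁵)` (`quartic_contact`).
So `g_β = o(t³)` always, and `g_β = o(t⁴)` for `β = β*`, where the coefficient vanishes. For a
function smooth at `0`, being `o(tᵐ)` forces the derivatives up to order `m` to vanish
(`iteratedDeriv_eq_zero_of_isLittleO`).
-/


open Filter Topology

/-- The Moutard pencil hyperquadric polynomial in the `x₁`-direction:
`g_β(x, y) = −y + (1/2)Σ ε_σ x_σ² + (2/3)ε₁K₁₁₁x₁y + 2ε₁Σ_{σ≥2}K₁₁σ x_σ y + βy²`. -/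
noncomputable def moutardG (n : ℕ) [NeZero n] (ε : Fin n → ℝ)
    (K : Fin n → Fin n → Fin n → ℝ) (β : ℝ) (x : Fin n → ℝ) (y : ℝ) : ℝ :=
  -y + (1 / 2) * ∑ σ, ε σ * (x σ) ^ 2 + (2 / 3) * ε 0 * K 0 0 0 * x 0 * y
    + 2 * ε 0 * (∑ σ ∈ Finset.univ.erase (0 : Fin n), K 0 0 σ * x σ) * y + β * y ^ 2

open Asymptotics

/-! ### Taylor expansions -/

/-- By induction on `n`: the lower derivatives vanish, so Taylor's formula reduces to
`g = c tⁿ + o(tⁿ)`, and `g = o(tⁿ)` then forces `c = 0`. -/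
theorem iteratedDeriv_eq_zero_of_isLittleO (n : ℕ) {g : ℝ → ℝ} (hg : ContDiffAt ℝ n g 0)
    (h : g =o[𝓝 0] fun t : ℝ => t ^ n) : ∀ j ≤ n, iteratedDeriv j g 0 = 0 := by
  induction n with
  | zero =>
    intro j hj
    obtain rfl : j = 0 := by omega
    have h1 : Tendsto g (𝓝 0) (𝓝 0) := by simpa using h
    simpa using tendsto_nhds_unique hg.continuousAt h1
  | succ n ih =>
    have hlow : ∀ j ≤ n, iteratedDeriv j g 0 = 0 := by
      refine ih (hg.of_le (by exact_mod_cast n.le_succ)) (h.trans ?_)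
      exact isLittleO_pow_pow n.lt_succ_self
    intro j hj
    rcases Nat.lt_or_ge j (n + 1) with hlt | hge
    · exact hlow j (by omega)
    obtain rfl : j = n + 1 := by omega
    obtain ⟨r, hr, hball⟩ : ∃ r > 0, ContDiffOn ℝ (n + 1 : ℕ) g (Metric.ball 0 r) := by
      obtain ⟨s, hs, hgs⟩ := hg.contDiffOn le_rfl (by simp)
      obtain ⟨r, hr, hrs⟩ := Metric.mem_nhds_iff.1 hs
      exact ⟨r, hr, hgs.mono hrs⟩
    have h0 : (0 : ℝ) ∈ Metric.ball (0 : ℝ) r := Metric.mem_ball_self hr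
    have ht := taylor_isLittleO (convex_ball 0 r) h0 hball
    rw [Metric.isOpen_ball.nhdsWithin_eq h0] at ht
    have heval : ∀ t, taylorWithinEval g (n + 1) (Metric.ball 0 r) 0 t
        = ((n + 1).factorial : ℝ)⁻¹ * iteratedDeriv (n + 1) g 0 * t ^ (n + 1) := by
      intro t
      rw [taylor_within_apply, Finset.sum_range_succ, Finset.sum_eq_zero]
      · rw [iteratedDerivWithin_of_isOpen Metric.isOpen_ball h0]
        simp; ring
      · intro k hk
        rw [iteratedDerivWithin_of_isOpen Metric.isOpen_ball h0,
          hlow k (by simpa [Nat.lt_succ_iff] using hk)]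
        simp
    simp only [heval, sub_zero] at ht
    have hc := h.sub ht
    simp only [sub_sub_cancel] at hc
    by_contra hne
    have hne' : ((n + 1).factorial : ℝ)⁻¹ * iteratedDeriv (n + 1) g 0 ≠ 0 :=
      mul_ne_zero (by positivity) hne
    rw [isLittleO_const_mul_left_iff hne'] at hc
    have := (hc.mono (nhdsWithin_le_nhds (s := {0}ᶜ))).def (c := 1/2) (by norm_num)
    obtain ⟨t, ht1, ht2⟩ := (this.and self_mem_nhdsWithin).exists
    have : 0 < ‖t ^ (n+1)‖ := by
      rw [norm_pos_iff]; exact pow_ne_zero _ ht2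
    linarith

/-- Taylor's formula in several variables, with remainder bounded through the integral form and the
boundedness of the derivative of order `n + 1` on the unit ball. -/
theorem taylor_remainder_isBigO {E : Type*} [NormedAddCommGroup E] [NormedSpace ℝ E]
    [FiniteDimensional ℝ E] (n : ℕ) {f : E → ℝ} (hf : ContDiff ℝ (⊤ : ℕ∞) f) :
    (fun y => f y - ∑ k ∈ Finset.range (n + 1),
      (k.factorial : ℝ)⁻¹ * iteratedFDeriv ℝ k f 0 (fun _ => y))
      =O[𝓝 0] fun y => ‖y‖ ^ (n + 1) := by
  have : ProperSpace E := FiniteDimensional.proper ℝ E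
  obtain ⟨C, hC⟩ := (isCompact_closedBall (0 : E) 1).exists_bound_of_continuousOn
    (f := iteratedFDeriv ℝ (n + 1) f)
    (hf.continuous_iteratedFDeriv (by exact_mod_cast le_top)).continuousOn
  refine IsBigO.of_bound ((n.factorial : ℝ)⁻¹ * C) ?_
  filter_upwards [Metric.closedBall_mem_nhds (0 : E) one_pos] with y hy
  have h := map_add_eq_sum_add_integral_iteratedFDeriv (f := f) (x := 0) (y := y) (n := n)
    (fun t _ => hf.contDiffAt.of_le (by exact_mod_cast le_top))
  simp only [zero_add, smul_eq_mul] at h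
  rw [h, add_sub_cancel_left, norm_mul, Real.norm_of_nonneg (by positivity), norm_pow, norm_norm,
    mul_assoc]
  gcongr
  have hi := intervalIntegral.norm_integral_le_of_norm_le_const (a := (0:ℝ)) (b := 1)
    (f := fun t : ℝ => (1 - t) ^ n * iteratedFDeriv ℝ (n + 1) f (t • y) fun _ => y)
    (C := C * ‖y‖ ^ (n + 1)) ?_
  · simpa using hi
  intro t ht
  rw [Set.uIoc_of_le zero_le_one] at ht
  have hty : t • y ∈ Metric.closedBall (0 : E) 1 := by
    rw [mem_closedBall_zero_iff] at hy ⊢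
    rw [norm_smul, Real.norm_of_nonneg ht.1.le]
    exact mul_le_one₀ ht.2 (norm_nonneg _) hy
  have h1 : ‖(1 - t) ^ n‖ ≤ 1 := by
    rw [norm_pow, Real.norm_of_nonneg (by linarith [ht.2])]
    exact pow_le_one₀ (by linarith [ht.2]) (by linarith [ht.1])
  have h2 : ‖iteratedFDeriv ℝ (n + 1) f (t • y) fun _ => y‖ ≤ C * ‖y‖ ^ (n + 1) := by
    refine ((iteratedFDeriv ℝ (n + 1) f (t • y)).le_opNorm _).trans ?_
    simp only [Finset.prod_const, Finset.card_univ, Fintype.card_fin]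
    gcongr
    exact hC _ hty
  rw [norm_mul]
  calc _ ≤ 1 * (C * ‖y‖ ^ (n + 1)) := by gcongr
    _ = _ := one_mul _

/-! ### Multilinear maps -/

/-- A perturbation of size `t²` of a vector of size `t` changes the value of a form of degree
`k + 1` on the diagonal by `O(t ^ (k + 2))`. -/
theorem multilinear_sub_isBigO {E : Type*} [NormedAddCommGroup E] [NormedSpace ℝ E] (k : ℕ)
    (T : ContinuousMultilinearMap ℝ (fun _ : Fin (k + 1) => E) ℝ) {x y : ℝ → E}
    (hx : x =O[𝓝 0] fun t : ℝ => t) (hy : y =O[𝓝 0] fun t : ℝ => t)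
    (hxy : (fun t => x t - y t) =O[𝓝 0] fun t : ℝ => t ^ 2) :
    (fun t => T (fun _ => x t) - T (fun _ => y t)) =O[𝓝 0] fun t : ℝ => t ^ (k + 2) := by
  have hb : (fun t => T (fun _ => x t) - T (fun _ => y t)) =O[𝓝 0]
      fun t : ℝ => (‖x t‖ + ‖y t‖) ^ k * ‖x t - y t‖ := by
    refine IsBigO.of_bound (‖T‖ * (k + 1)) (Eventually.of_forall fun t => ?_)
    refine (T.norm_image_sub_le _ _).trans ?_
    have e : (fun _ : Fin (k + 1) => x t) - (fun _ => y t) = fun _ => x t - y t := rfl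
    rw [e, pi_norm_const, pi_norm_const, pi_norm_const, Fintype.card_fin, mul_assoc,
      Real.norm_of_nonneg (by positivity)]
    push_cast
    gcongr
    exact max_le_add_of_nonneg (norm_nonneg _) (norm_nonneg _)
  refine hb.trans ((((hx.norm_left.add hy.norm_left).pow k).mul hxy.norm_left).congr_right ?_)
  intro t
  ring

section Slots

variable {E : Type*} [AddCommGroup E] [Module ℝ E] [TopologicalSpace E]

/-- A multilinear map is linear in its `i`-th argument; `c` is any other way of writing the vector
of arguments with `p` in position `i`. -/
theorem isLinearMap_slot {k : ℕ} (T : ContinuousMultilinearMap ℝ (fun _ : Fin k => E) ℝ)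
    (m : Fin k → E) (i : Fin k) {c : E → Fin k → E} (hc : ∀ p, c p = Function.update m i p) :
    IsLinearMap ℝ fun p => T (c p) := by
  simp only [hc]
  exact ⟨T.map_update_add m i, T.map_update_smul m i⟩

variable (T₂ : ContinuousMultilinearMap ℝ (fun _ : Fin 2 => E) ℝ)
  (T₃ : ContinuousMultilinearMap ℝ (fun _ : Fin 3 => E) ℝ)

theorem isLinearMap_pair_fst (x : E) : IsLinearMap ℝ fun p => T₂ ![p, x] :=
  isLinearMap_slot T₂ ![0, x] 0 fun p => by funext j; fin_cases j <;> rfl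

theorem isLinearMap_pair_snd (x : E) : IsLinearMap ℝ fun p => T₂ ![x, p] :=
  isLinearMap_slot T₂ ![x, 0] 1 fun p => by funext j; fin_cases j <;> rfl

theorem isLinearMap_triple_fst (x y : E) : IsLinearMap ℝ fun p => T₃ ![p, x, y] :=
  isLinearMap_slot T₃ ![0, x, y] 0 fun p => by funext j; fin_cases j <;> rfl

theorem isLinearMap_triple_snd (x y : E) : IsLinearMap ℝ fun p => T₃ ![x, p, y] :=
  isLinearMap_slot T₃ ![x, 0, y] 1 fun p => by funext j; fin_cases j <;> rfl

theorem isLinearMap_triple_thd (x y : E) : IsLinearMap ℝ fun p => T₃ ![x, y, p] :=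
  isLinearMap_slot T₃ ![x, y, 0] 2 fun p => by funext j; fin_cases j <;> rfl

theorem bilinear_expand (a b : E) (s t : ℝ) :
    T₂ (fun _ => s • a + t • b) = s ^ 2 * T₂ ![a, a] + s * t * (T₂ ![a, b] + T₂ ![b, a])
      + t ^ 2 * T₂ ![b, b] := by
  have e : (fun _ : Fin 2 => s • a + t • b) = ![s • a + t • b, s • a + t • b] := by
    funext i; fin_cases i <;> rfl
  rw [e]
  simp only [(isLinearMap_pair_fst T₂ _).map_add, (isLinearMap_pair_fst T₂ _).map_smul,
    (isLinearMap_pair_snd T₂ _).map_add, (isLinearMap_pair_snd T₂ _).map_smul, smul_eq_mul]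
  ring

theorem trilinear_expand (a b : E) (s t : ℝ) :
    T₃ (fun _ => s • a + t • b) = s ^ 3 * T₃ ![a, a, a]
      + s ^ 2 * t * (T₃ ![a, a, b] + T₃ ![a, b, a] + T₃ ![b, a, a])
      + s * t ^ 2 * (T₃ ![a, b, b] + T₃ ![b, a, b] + T₃ ![b, b, a])
      + t ^ 3 * T₃ ![b, b, b] := by
  have e : (fun _ : Fin 3 => s • a + t • b)
      = ![s • a + t • b, s • a + t • b, s • a + t • b] := by
    funext i; fin_cases i <;> rfl
  rw [e]
  simp only [(isLinearMap_triple_fst T₃ _ _).map_add, (isLinearMap_triple_fst T₃ _ _).map_smul,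
    (isLinearMap_triple_snd T₃ _ _).map_add, (isLinearMap_triple_snd T₃ _ _).map_smul,
    (isLinearMap_triple_thd T₃ _ _).map_add, (isLinearMap_triple_thd T₃ _ _).map_smul,
    smul_eq_mul]
  ring

end Slots

/-! ### Contact of the section with the pencil -/

/-- The scalar computation behind the theorem: `e`, `k`, `h` stand for `ε₁`, `K₁₁₁`, `H₁₁₁₁`, and
`E`, `S` for the sums `Σ_{σ≥2} ε_σ λ_σ²` and `Σ_{σ≥2} K₁₁σ λ_σ`; the expression in `u` is `g_β`
along the section. -/
theorem quartic_contact {u : ℝ → ℝ} {e E S k h : ℝ} (he : e ^ 2 = 1)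
    (hu2 : u =O[𝓝 0] fun t : ℝ => t ^ 2)
    (hr : (fun t => u t - (1 / 2 * e * t ^ 2 + 1 / 2 * E * u t ^ 2 + k / 3 * t ^ 3
      + S * t ^ 2 * u t + h / 12 * t ^ 4)) =O[𝓝 0] fun t : ℝ => t ^ 5) (β : ℝ) :
    (fun t => (-u t + 1 / 2 * (e * t ^ 2 + E * u t ^ 2) + 2 / 3 * e * k * t * u t
      + 2 * e * (S * u t) * u t + β * u t ^ 2)
      - (β / 4 + 2 / 9 * e * k ^ 2 - h / 12) * t ^ 4) =O[𝓝 0] fun t : ℝ => t ^ 5 := by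
  have hid : (fun t : ℝ => t) =O[𝓝 0] fun t : ℝ => t := isBigO_refl _ _
  have hu4 : (fun t => u t ^ 2) =O[𝓝 0] fun t : ℝ => t ^ 4 :=
    (hu2.pow 2).congr_right fun t => by ring
  have htu4 : (fun t => t ^ 2 * u t) =O[𝓝 0] fun t : ℝ => t ^ 4 :=
    ((hid.pow 2).mul hu2).congr_right fun t => by ring
  have hq : (fun t => u t - 1 / 2 * e * t ^ 2 - k / 3 * t ^ 3) =O[𝓝 0] fun t : ℝ => t ^ 4 :=
    ((((hr.trans (isLittleO_pow_pow (by norm_num)).isBigO).add (hu4.const_mul_left (1 / 2 * E))).add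
      (htu4.const_mul_left S)).add ((hid.pow 4).const_mul_left (h / 12))).congr_left
      fun t => by ring
  have hv : (fun t => u t - 1 / 2 * e * t ^ 2) =O[𝓝 0] fun t : ℝ => t ^ 3 :=
    ((hq.trans (isLittleO_pow_pow (by norm_num)).isBigO).add ((hid.pow 3).const_mul_left (k / 3))).congr_left
      fun t => by ring
  have huv : (fun t => u t * (u t - 1 / 2 * e * t ^ 2)) =O[𝓝 0] fun t : ℝ => t ^ 5 :=
    (hu2.mul hv).congr_right fun t => by ring
  have htq : (fun t => t * (u t - 1 / 2 * e * t ^ 2 - k / 3 * t ^ 3))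
      =O[𝓝 0] fun t : ℝ => t ^ 5 :=
    (hid.mul hq).congr_right fun t => by ring
  have htv : (fun t => t ^ 2 * (u t - 1 / 2 * e * t ^ 2)) =O[𝓝 0] fun t : ℝ => t ^ 5 :=
    ((hid.pow 2).mul hv).congr_right fun t => by ring
  -- With `v = u - e t²/2 = O(t³)` and `q = v - k t³/3 = O(t⁴)`, the difference is
  -- `(2eS + β) u v + (2/3) e k t q + (βe/2) t² v` minus the remainder of `hr`, since `e² = 1`.
  refine ((((huv.const_mul_left (2 * e * S + β)).add (htq.const_mul_left (2 / 3 * e * k))).add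
    (htv.const_mul_left (β * e / 2))).sub hr).congr_left fun t => ?_
  linear_combination (-(S * t ^ 2 * u t) - k / 3 * t ^ 3 - β / 4 * t ^ 4) * he

theorem isLinearMap_apply_transverse {n : ℕ} [NeZero n] (lam : Fin n → ℝ)
    {L : (Fin n → ℝ) → ℝ} (hL : IsLinearMap ℝ L) :
    L (fun i => if i = 0 then 0 else lam i)
      = ∑ i ∈ Finset.univ.erase (0 : Fin n), lam i * L (stdBasis n i) := by
  have h : (fun i : Fin n => if i = 0 then 0 else lam i)
      = ∑ i ∈ Finset.univ.erase (0 : Fin n), lam i • stdBasis n i := by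
    funext j
    simp [stdBasis, Finset.sum_apply, Pi.single_apply]
  rw [h]
  simpa using map_sum (hL.mk' L) (fun i => lam i • stdBasis n i) (Finset.univ.erase (0 : Fin n))

/-- The expansion of the implicit function `u` obtained from the Taylor expansion of `f` at the
origin, with the transverse variables `x_σ = λ_σ u` substituted. -/
theorem section_expansion (n : ℕ) [NeZero n]
    (ε : Fin n → ℝ) (K : Fin n → Fin n → Fin n → ℝ)
    (hKsym₁ : ∀ i j k, K i j k = K j i k)
    (hKsym₂ : ∀ i j k, K i j k = K i k j)
    (H : Fin n → Fin n → Fin n → Fin n → ℝ)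
    (f : (Fin n → ℝ) → ℝ)
    (hf : ContDiff ℝ (⊤ : ℕ∞) f) (hf0 : f 0 = 0) (hdf : fderiv ℝ f 0 = 0)
    (hf2 : ∀ i j, iteratedFDeriv ℝ 2 f 0 ![stdBasis n i, stdBasis n j]
      = if i = j then ε i else 0)
    (hf3 : ∀ i j k, iteratedFDeriv ℝ 3 f 0 ![stdBasis n i, stdBasis n j, stdBasis n k]
      = 2 * K i j k)
    (hf4 : ∀ i j k l,
      iteratedFDeriv ℝ 4 f 0 ![stdBasis n i, stdBasis n j, stdBasis n k, stdBasis n l]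
      = 2 * H i j k l)
    (lam : Fin n → ℝ)
    (u : ℝ → ℝ) (hu : DifferentiableAt ℝ u 0) (hu0 : u 0 = 0)
    (huf : ∀ᶠ t in 𝓝 (0 : ℝ), u t = f (fun i => if i = 0 then t else lam i * u t)) :
    (u =O[𝓝 0] fun t : ℝ => t ^ 2) ∧
    (fun t => u t - (1 / 2 * ε 0 * t ^ 2
      + 1 / 2 * (∑ i ∈ Finset.univ.erase (0 : Fin n), ε i * lam i ^ 2) * u t ^ 2
      + K 0 0 0 / 3 * t ^ 3
      + (∑ i ∈ Finset.univ.erase (0 : Fin n), K 0 0 i * lam i) * t ^ 2 * u t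
      + H 0 0 0 0 / 12 * t ^ 4)) =O[𝓝 0] fun t : ℝ => t ^ 5 := by
  set w : Fin n → ℝ := fun i => if i = 0 then 0 else lam i with hw
  set a : Fin n → ℝ := stdBasis n 0 with ha
  have hcurve : ∀ t, (fun i => if i = 0 then t else lam i * u t) = t • a + u t • w := by
    intro t
    funext i
    by_cases hi : i = 0 <;> simp [hw, ha, stdBasis, hi, mul_comm]
  simp only [hcurve] at huf
  have hid : (fun t : ℝ => t) =O[𝓝 0] fun t : ℝ => t := isBigO_refl _ _
  have hu1 : u =O[𝓝 0] fun t : ℝ => t := by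
    simpa [hu0] using hu.isBigO_sub
  have hsmul : ∀ {v g : ℝ → ℝ} (b : Fin n → ℝ), v =O[𝓝 0] g →
      (fun t => v t • b) =O[𝓝 0] g := by
    intro v g b hv
    simpa using hv.smul (isBigO_refl (fun _ => b) _) |>.trans
      (IsBigO.of_bound ‖b‖ (Eventually.of_forall fun t => by
        simp [norm_smul, mul_comm]) :
          (fun t => g t • b) =O[𝓝 0] g)
  have hx1 : (fun t => t • a + u t • w) =O[𝓝 0] fun t : ℝ => t :=
    (hsmul a hid).add (hsmul w hu1)
  have hx0 : Tendsto (fun t => t • a + u t • w) (𝓝 0) (𝓝 0) :=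
    hx1.trans_tendsto tendsto_id
  have hrem : ∀ m : ℕ, (fun t => u t - ∑ k ∈ Finset.range (m + 1),
      (k.factorial : ℝ)⁻¹ * iteratedFDeriv ℝ k f 0 (fun _ => t • a + u t • w))
      =O[𝓝 0] fun t : ℝ => t ^ (m + 1) := by
    intro m
    have h := ((taylor_remainder_isBigO m hf).comp_tendsto hx0).trans (hx1.norm_left.pow (m + 1))
    refine h.congr' ?_ EventuallyEq.rfl
    filter_upwards [huf] with t ht
    simp [← ht]
  -- Taylor's formula to order one: both `f` and `df` vanish at the origin.
  have hu2 : u =O[𝓝 0] fun t : ℝ => t ^ 2 := by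
    simpa [Finset.sum_range_succ, hf0, hdf] using hrem 1
  refine ⟨hu2, ?_⟩
  set S := ∑ i ∈ Finset.univ.erase (0 : Fin n), K 0 0 i * lam i with hS
  set E := ∑ i ∈ Finset.univ.erase (0 : Fin n), ε i * lam i ^ 2 with hE
  have haw : iteratedFDeriv ℝ 2 f 0 ![a, w] = 0 := by
    rw [hw, isLinearMap_apply_transverse lam (isLinearMap_pair_snd _ _)]
    refine Finset.sum_eq_zero fun i hi => ?_
    rw [ha, hf2, if_neg (Finset.ne_of_mem_erase hi).symm, mul_zero]
  have hwa : iteratedFDeriv ℝ 2 f 0 ![w, a] = 0 := by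
    rw [hw, isLinearMap_apply_transverse lam (isLinearMap_pair_fst _ _)]
    refine Finset.sum_eq_zero fun i hi => ?_
    rw [ha, hf2, if_neg (Finset.ne_of_mem_erase hi), mul_zero]
  have hww : iteratedFDeriv ℝ 2 f 0 ![w, w] = E := by
    conv_lhs => rw [hw]
    rw [isLinearMap_apply_transverse lam (isLinearMap_pair_fst _ _)]
    refine Finset.sum_congr rfl fun i hi => ?_
    rw [isLinearMap_apply_transverse lam (isLinearMap_pair_snd _ _),
      Finset.sum_eq_single_of_mem i hi]
    · rw [hf2, if_pos rfl]; ring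
    · intro j _ hj
      rw [hf2, if_neg hj.symm, mul_zero]
  have h3 : iteratedFDeriv ℝ 3 f 0 ![a, a, w] = 2 * S ∧ iteratedFDeriv ℝ 3 f 0 ![a, w, a] = 2 * S
      ∧ iteratedFDeriv ℝ 3 f 0 ![w, a, a] = 2 * S := by
    rw [hw, isLinearMap_apply_transverse lam (isLinearMap_triple_thd _ _ _),
      isLinearMap_apply_transverse lam (isLinearMap_triple_snd _ _ _),
      isLinearMap_apply_transverse lam (isLinearMap_triple_fst _ _ _), hS, Finset.mul_sum]
    refine ⟨Finset.sum_congr rfl fun i _ => ?_, Finset.sum_congr rfl fun i _ => ?_,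
      Finset.sum_congr rfl fun i _ => ?_⟩
    · rw [ha, hf3]; ring
    · rw [ha, hf3, hKsym₂ 0 i 0]; ring
    · rw [ha, hf3, hKsym₁ i 0 0, hKsym₂ 0 i 0]; ring
  have h4 : (fun t => iteratedFDeriv ℝ 4 f 0 (fun _ => t • a + u t • w)
      - 2 * H 0 0 0 0 * t ^ 4) =O[𝓝 0] fun t : ℝ => t ^ 5 := by
    refine (multilinear_sub_isBigO 3 (iteratedFDeriv ℝ 4 f 0) hx1 (hsmul a hid)
      ((hsmul w hu2).congr_left fun t => by simp)).congr_left fun t => ?_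
    have hc : (fun _ : Fin 4 => a) = ![a, a, a, a] := by funext i; fin_cases i <;> rfl
    have := (iteratedFDeriv ℝ 4 f 0).map_smul_univ (fun _ => t) (fun _ => a)
    rw [this, hc, ha, hf4]
    simp; ring
  have htu : (fun t => t * u t ^ 2) =O[𝓝 0] fun t : ℝ => t ^ 5 :=
    (hid.mul (hu2.pow 2)).congr_right fun t => by ring
  have huuu : (fun t => u t ^ 3) =O[𝓝 0] fun t : ℝ => t ^ 5 :=
    (hu1.mul (hu2.pow 2)).congr (fun t => by ring) fun t => by ring
  have haa : iteratedFDeriv ℝ 2 f 0 ![a, a] = ε 0 := by rw [ha, hf2, if_pos rfl]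
  have haaa : iteratedFDeriv ℝ 3 f 0 ![a, a, a] = 2 * K 0 0 0 := hf3 0 0 0
  refine ((((hrem 4).add (h4.const_mul_left (1 / 24))).add (htu.const_mul_left (1 / 6 *
    (iteratedFDeriv ℝ 3 f 0 ![a, w, w] + iteratedFDeriv ℝ 3 f 0 ![w, a, w]
      + iteratedFDeriv ℝ 3 f 0 ![w, w, a])))).add
    (huuu.const_mul_left (1 / 6 * iteratedFDeriv ℝ 3 f 0 ![w, w, w]))).congr_left fun t => ?_
  simp only [Finset.sum_range_succ, Finset.sum_range_zero, bilinear_expand, trilinear_expand,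
    haa, haw, hwa, hww, haaa, h3.1, h3.2.1, h3.2.2]
  simp [hf0, hdf, Nat.factorial]
  ring

/-- every hyperquadric of the Moutard pencil has contact of order 3 with the
2-plane sections of the hypersurface through the `x₁`-axis, and the Moutard hyperquadric
(`β = β* = (1/9)(3H₁₁₁₁ − 8ε₁K₁₁₁²)`) has contact of order 4. -/
theorem statement2 (n : ℕ) [NeZero n] (hn : 2 ≤ n)
    (ε : Fin n → ℝ) (hε : ∀ i, ε i = 1 ∨ ε i = -1)
    (K : Fin n → Fin n → Fin n → ℝ)
    (hKsym₁ : ∀ i j k, K i j k = K j i k)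
    (hKsym₂ : ∀ i j k, K i j k = K i k j)
    (H : Fin n → Fin n → Fin n → Fin n → ℝ)
    (hHsym₁ : ∀ i j k l, H i j k l = H j i k l)
    (hHsym₂ : ∀ i j k l, H i j k l = H i k j l)
    (hHsym₃ : ∀ i j k l, H i j k l = H i j l k)
    (f : (Fin n → ℝ) → ℝ)
    (hf : ContDiff ℝ (⊤ : ℕ∞) f) (hf0 : f 0 = 0) (hdf : fderiv ℝ f 0 = 0)
    (hf2 : ∀ i j, iteratedFDeriv ℝ 2 f 0 ![stdBasis n i, stdBasis n j]
      = if i = j then ε i else 0)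
    (hf3 : ∀ i j k, iteratedFDeriv ℝ 3 f 0 ![stdBasis n i, stdBasis n j, stdBasis n k]
      = 2 * K i j k)
    (hf4 : ∀ i j k l,
      iteratedFDeriv ℝ 4 f 0 ![stdBasis n i, stdBasis n j, stdBasis n k, stdBasis n l]
      = 2 * H i j k l)
    (lam : Fin n → ℝ)
    (u : ℝ → ℝ) (hu : ContDiffAt ℝ (⊤ : ℕ∞) u 0) (hu0 : u 0 = 0)
    (huf : ∀ᶠ t in 𝓝 (0 : ℝ), u t = f (fun i => if i = 0 then t else lam i * u t)) :
    (∀ β : ℝ, ∀ j ≤ 3, iteratedDeriv j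
      (fun t => moutardG n ε K β (fun i => if i = 0 then t else lam i * u t) (u t)) 0 = 0) ∧
    (∀ j ≤ 4, iteratedDeriv j
      (fun t => moutardG n ε K ((1 / 9) * (3 * H 0 0 0 0 - 8 * ε 0 * (K 0 0 0) ^ 2))
        (fun i => if i = 0 then t else lam i * u t) (u t)) 0 = 0) := by
  obtain ⟨hu2, hr⟩ := section_expansion n ε K hKsym₁ hKsym₂ H f hf hf0 hdf hf2 hf3 hf4 lam u
    (hu.differentiableAt (by simp)) hu0 huf
  have he : ε 0 ^ 2 = 1 := by rcases hε 0 with h | h <;> simp [h]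
  have hG : ∀ β t, moutardG n ε K β (fun i => if i = 0 then t else lam i * u t) (u t)
      = -u t + 1 / 2 * (ε 0 * t ^ 2
          + (∑ i ∈ Finset.univ.erase (0 : Fin n), ε i * lam i ^ 2) * u t ^ 2)
        + 2 / 3 * ε 0 * K 0 0 0 * t * u t
        + 2 * ε 0 * ((∑ i ∈ Finset.univ.erase (0 : Fin n), K 0 0 i * lam i) * u t) * u t
        + β * u t ^ 2 := by
    intro β t
    have h1 : ∑ i, ε i * (if i = 0 then t else lam i * u t) ^ 2 = ε 0 * t ^ 2
        + (∑ i ∈ Finset.univ.erase (0 : Fin n), ε i * lam i ^ 2) * u t ^ 2 := by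
      rw [← Finset.add_sum_erase _ _ (Finset.mem_univ (0 : Fin n)), if_pos rfl, Finset.sum_mul]
      congr 1
      refine Finset.sum_congr rfl fun i hi => ?_
      rw [if_neg (Finset.ne_of_mem_erase hi)]
      ring
    have h2 : ∑ i ∈ Finset.univ.erase (0 : Fin n), K 0 0 i * (if i = 0 then t else lam i * u t)
        = (∑ i ∈ Finset.univ.erase (0 : Fin n), K 0 0 i * lam i) * u t := by
      rw [Finset.sum_mul]
      refine Finset.sum_congr rfl fun i hi => ?_
      rw [if_neg (Finset.ne_of_mem_erase hi)]
      ring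
    simp only [moutardG, h1, h2, if_true]
  have hsmooth : ∀ (m : ℕ) (β : ℝ), ContDiffAt ℝ m
      (fun t => moutardG n ε K β (fun i => if i = 0 then t else lam i * u t) (u t)) 0 := by
    intro m β
    have hum : ContDiffAt ℝ m u 0 := hu.of_le (by exact_mod_cast le_top)
    simp only [hG]
    fun_prop
  refine ⟨fun β => iteratedDeriv_eq_zero_of_isLittleO 3 (hsmooth 3 β) ?_,
    iteratedDeriv_eq_zero_of_isLittleO 4 (hsmooth 4 _) ?_⟩
  · simp only [hG]
    have h4 : (fun t : ℝ => t ^ 4) =o[𝓝 0] fun t : ℝ => t ^ 3 := isLittleO_pow_pow (by norm_num)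
    have h5 : (fun t : ℝ => t ^ 5) =o[𝓝 0] fun t : ℝ => t ^ 3 := isLittleO_pow_pow (by norm_num)
    exact (((quartic_contact he hu2 hr β).trans_isLittleO h5).add (h4.const_mul_left
      (β / 4 + 2 / 9 * ε 0 * K 0 0 0 ^ 2 - H 0 0 0 0 / 12))).congr_left fun t => by ring
  · simp only [hG]
    have h5 : (fun t : ℝ => t ^ 5) =o[𝓝 0] fun t : ℝ => t ^ 4 := isLittleO_pow_pow (by norm_num)
    refine ((quartic_contact he hu2 hr
      ((1 / 9) * (3 * H 0 0 0 0 - 8 * ε 0 * (K 0 0 0) ^ 2))).trans_isLittleO h5).congr_left fun t => ?_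
    ring
end

section
/- For every λ = (λ_2,…,λ_n) ∈ ℝ^{n−1}, set a_2 = ε_1/2, a_3 = (1/3)K_{111}, a_4 = (1/12)H_{1111} + (ε_1/2)Σ_{σ=2}^n K_{11σ} λ_σ + (1/8)Σ_{σ=2}^n ε_σ λ_σ². Then substituting x_σ = λ_σ y for σ = 2,…,n and x_{n+1} = y into the Moutard hyperquadric polynomial yields exactly the osculating conic polynomial: g_{β*}(x_1, λ_2 y, …, λ_n y, y) = −y + a_2 x_1² + (a_3/a_2) x_1 y + ((a_2 a_4 − a_3²)/a_2³) y², as an identity of polynomials in (x_1, y). -/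
/-- substituting `x_σ = λ_σ y` (σ = 2,…,n) and `x_{n+1} = y` into the Moutard
hyperquadric polynomial `g_{β*}` yields exactly the osculating conic polynomial
`−y + a₂x₁² + (a₃/a₂)x₁y + ((a₂a₄ − a₃²)/a₂³)y²` with `a₂ = ε₁/2`, `a₃ = K₁₁₁/3`,
`a₄ = H₁₁₁₁/12 + (ε₁/2)Σ_{σ≥2}K₁₁σλ_σ + (1/8)Σ_{σ≥2}ε_σλ_σ²`. -/
theorem statement3 (n : ℕ) [NeZero n] (hn : 2 ≤ n)
    (ε : Fin n → ℝ) (hε : ∀ i, ε i = 1 ∨ ε i = -1)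
    (K : Fin n → Fin n → Fin n → ℝ)
    (hKsym₁ : ∀ i j k, K i j k = K j i k)
    (hKsym₂ : ∀ i j k, K i j k = K i k j)
    (H : Fin n → Fin n → Fin n → Fin n → ℝ)
    (hHsym₁ : ∀ i j k l, H i j k l = H j i k l)
    (hHsym₂ : ∀ i j k l, H i j k l = H i k j l)
    (hHsym₃ : ∀ i j k l, H i j k l = H i j l k)
    (lam : Fin n → ℝ) :
    ∀ x1 y : ℝ,
      moutardG n ε K ((1 / 9) * (3 * H 0 0 0 0 - 8 * ε 0 * (K 0 0 0) ^ 2))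
        (fun i => if i = 0 then x1 else lam i * y) y =
      -y + (ε 0 / 2) * x1 ^ 2 + (((1 / 3) * K 0 0 0) / (ε 0 / 2)) * x1 * y +
        (((ε 0 / 2) *
            ((1 / 12) * H 0 0 0 0
              + (ε 0 / 2) * ∑ σ ∈ Finset.univ.erase (0 : Fin n), K 0 0 σ * lam σ
              + (1 / 8) * ∑ σ ∈ Finset.univ.erase (0 : Fin n), ε σ * (lam σ) ^ 2)
          - ((1 / 3) * K 0 0 0) ^ 2) / (ε 0 / 2) ^ 3) * y ^ 2 := by
  intro x1 y
  -- The `σ = 0` term gives `ε₀ x₁²`; every other term acquires a factor `y²`.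
  have hquad : ∑ σ, ε σ * (if σ = 0 then x1 else lam σ * y) ^ 2
      = ε 0 * x1 ^ 2 + (∑ σ ∈ Finset.univ.erase (0 : Fin n), ε σ * (lam σ) ^ 2) * y ^ 2 := by
    rw [← Finset.add_sum_erase _ _ (Finset.mem_univ (0 : Fin n)), if_pos rfl, Finset.sum_mul]
    congr 1
    refine Finset.sum_congr rfl fun σ hσ => ?_
    rw [if_neg (Finset.ne_of_mem_erase hσ)]
    ring
  have hcubic : ∑ σ ∈ Finset.univ.erase (0 : Fin n), K 0 0 σ * (if σ = 0 then x1 else lam σ * y)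
      = (∑ σ ∈ Finset.univ.erase (0 : Fin n), K 0 0 σ * lam σ) * y := by
    rw [Finset.sum_mul]
    refine Finset.sum_congr rfl fun σ hσ => ?_
    rw [if_neg (Finset.ne_of_mem_erase hσ)]
    ring
  simp only [moutardG, hquad, hcubic, if_true]
  rcases hε 0 with h | h <;> rw [h] <;> ring
end

section
/- For every β ∈ ℝ, the degree-3 Taylor coefficients of the contact function φ_β(x) = g_β(x, f(x)) at the origin satisfy: the coefficient of x_1³ is 0; the coefficient of x_1² x_σ is 0 for every 2 ≤ σ ≤ n; the coefficient of x_1 x_σ² equals b_{1σσ} = (ε_1 ε_σ/3) K_{111} − K_{1σσ} for every 2 ≤ σ ≤ n; and the coefficient of x_1 x_σ x_τ equals −2 K_{1στ} for all 2 ≤ σ < τ ≤ n. In particular the 3-jet of φ_β has the form x_1·q(x_2,…,x_n) + p_3(x_2,…,x_n) with q quadratic and p_3 cubic, where q is independent of β. -/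
/-- The directional derivative of `h` in the direction `w`, as a function of the base point. -/
noncomputable def dirDeriv {E : Type*} [NormedAddCommGroup E] [NormedSpace ℝ E]
    (w : E) (h : E → ℝ) : E → ℝ := fun x => fderiv ℝ h x w

section dirDeriv

open scoped ContDiff

variable {E : Type*} [NormedAddCommGroup E] [NormedSpace ℝ E]

-- `ContDiff.add` and `ContDiff.mul` conclude about `fun x => g x + h x`; the rewrites below need
-- the sum and the product in `E → ℝ`.
lemma contDiff_pi_add {g h : E → ℝ} (hg : ContDiff ℝ ∞ g) (hh : ContDiff ℝ ∞ h) :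
    ContDiff ℝ ∞ (g + h) := hg.add hh

lemma contDiff_pi_mul {g h : E → ℝ} (hg : ContDiff ℝ ∞ g) (hh : ContDiff ℝ ∞ h) :
    ContDiff ℝ ∞ (g * h) := hg.mul hh

lemma dirDeriv_contDiff {h : E → ℝ} (hh : ContDiff ℝ ∞ h) (w : E) :
    ContDiff ℝ ∞ (dirDeriv w h) :=
  (hh.fderiv_right (m := ∞) (by simp)).clm_apply contDiff_const

lemma dirDeriv_add {g h : E → ℝ} (hg : ContDiff ℝ ∞ g) (hh : ContDiff ℝ ∞ h) (w : E) :
    dirDeriv w (g + h) = dirDeriv w g + dirDeriv w h := by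
  funext x
  simp [dirDeriv, fderiv_add (hg.differentiable (by simp) x) (hh.differentiable (by simp) x)]

lemma dirDeriv_neg (h : E → ℝ) (w : E) : dirDeriv w (-h) = -dirDeriv w h := by
  funext x
  simp [dirDeriv, fderiv_neg]

lemma dirDeriv_mul {g h : E → ℝ} (hg : ContDiff ℝ ∞ g) (hh : ContDiff ℝ ∞ h) (w : E) :
    dirDeriv w (g * h) = g * dirDeriv w h + h * dirDeriv w g := by
  funext x
  simp [dirDeriv, fderiv_mul (hg.differentiable (by simp) x) (hh.differentiable (by simp) x)]

lemma dirDeriv_clm (l : E →L[ℝ] ℝ) (w : E) : dirDeriv w (l : E → ℝ) = fun _ => l w := by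
  funext x
  simp [dirDeriv]

lemma dirDeriv_const (c : ℝ) (w : E) : dirDeriv w (fun _ : E => c) = 0 := by
  funext x
  simp [dirDeriv]

lemma dirDeriv_sum {ι : Type*} (s : Finset ι) {g : ι → E → ℝ} (hg : ∀ i, ContDiff ℝ ∞ (g i))
    (w : E) : dirDeriv w (∑ i ∈ s, g i) = ∑ i ∈ s, dirDeriv w (g i) := by
  funext x
  simp [dirDeriv, fderiv_sum (fun i _ => (hg i).differentiable (by simp) x)]

lemma iteratedFDeriv_succ_eq_dirDeriv {h : E → ℝ} (hh : ContDiff ℝ ∞ h) (k : ℕ) (x : E)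
    (m : Fin (k + 1) → E) :
    iteratedFDeriv ℝ (k + 1) h x m
      = dirDeriv (m 0) (fun y => iteratedFDeriv ℝ k h y (Fin.tail m)) x := by
  have hd : DifferentiableAt ℝ (iteratedFDeriv ℝ k h) x :=
    (hh.differentiable_iteratedFDeriv (by exact_mod_cast WithTop.coe_lt_top k)) x
  rw [iteratedFDeriv_succ_apply_left, dirDeriv,
    fderiv_continuousMultilinear_apply_const_apply hd]

lemma iteratedFDeriv_one_eq {h : E → ℝ} (hh : ContDiff ℝ ∞ h) (x w : E) :
    iteratedFDeriv ℝ 1 h x ![w] = dirDeriv w h x := by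
  rw [iteratedFDeriv_succ_eq_dirDeriv hh]
  simp

lemma iteratedFDeriv_two_eq {h : E → ℝ} (hh : ContDiff ℝ ∞ h) (x v w : E) :
    iteratedFDeriv ℝ 2 h x ![v, w] = dirDeriv v (dirDeriv w h) x := by
  rw [iteratedFDeriv_succ_eq_dirDeriv hh]
  exact congrArg (fun g => dirDeriv v g x) (funext fun y => iteratedFDeriv_one_eq hh y w)

lemma iteratedFDeriv_three_eq {h : E → ℝ} (hh : ContDiff ℝ ∞ h) (x u v w : E) :
    iteratedFDeriv ℝ 3 h x ![u, v, w] = dirDeriv u (dirDeriv v (dirDeriv w h)) x := by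
  rw [iteratedFDeriv_succ_eq_dirDeriv hh]
  exact congrArg (fun g => dirDeriv u g x) (funext fun y => iteratedFDeriv_two_eq hh y v w)

/-- The Leibniz rule for the third derivative of a product at a point where the first factor
vanishes and the second vanishes to first order. -/
lemma thirdDeriv_mul {a b : E → ℝ} (ha : ContDiff ℝ ∞ a) (hb : ContDiff ℝ ∞ b) {x : E}
    (ha0 : a x = 0) (hb0 : b x = 0) (hdb : ∀ w, dirDeriv w b x = 0) (u v w : E) :
    dirDeriv u (dirDeriv v (dirDeriv w (a * b))) x
      = dirDeriv u a x * dirDeriv v (dirDeriv w b) x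
        + dirDeriv v a x * dirDeriv u (dirDeriv w b) x
        + dirDeriv w a x * dirDeriv u (dirDeriv v b) x := by
  have ca := dirDeriv_contDiff ha
  have cb := dirDeriv_contDiff hb
  have caa := fun p q => dirDeriv_contDiff (ca p) q
  have cbb := fun p q => dirDeriv_contDiff (cb p) q
  have mul := fun {g h : E → ℝ} => contDiff_pi_mul (g := g) (h := h)
  have sadd := fun {g h : E → ℝ} => contDiff_pi_add (g := g) (h := h)
  rw [dirDeriv_mul ha hb, dirDeriv_add (mul ha (cb w)) (mul hb (ca w)), dirDeriv_mul ha (cb w),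
    dirDeriv_mul hb (ca w),
    dirDeriv_add (sadd (mul ha (cbb w v)) (mul (cb w) (ca v)))
      (sadd (mul hb (caa w v)) (mul (ca w) (cb v))),
    dirDeriv_add (mul ha (cbb w v)) (mul (cb w) (ca v)),
    dirDeriv_add (mul hb (caa w v)) (mul (ca w) (cb v)),
    dirDeriv_mul ha (cbb w v), dirDeriv_mul (cb w) (ca v), dirDeriv_mul hb (caa w v),
    dirDeriv_mul (ca w) (cb v)]
  simp only [Pi.add_apply, Pi.mul_apply, ha0, hb0, hdb]
  ring

lemma thirdDeriv_clm_mul_clm (l m : E →L[ℝ] ℝ) (u v w : E) :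
    dirDeriv u (dirDeriv v (dirDeriv w ((l : E → ℝ) * (m : E → ℝ)))) = 0 := by
  have h : dirDeriv w ((l : E → ℝ) * (m : E → ℝ)) = ((m w • l + l w • m : E →L[ℝ] ℝ) : E → ℝ) := by
    rw [dirDeriv_mul l.contDiff m.contDiff, dirDeriv_clm, dirDeriv_clm]
    funext x
    simp [mul_comm]
  rw [h, dirDeriv_clm, dirDeriv_const]

lemma thirdDeriv_sum_clm_mul_clm {ι : Type*} (s : Finset ι) (l m : ι → E →L[ℝ] ℝ) (u v w : E) :
    dirDeriv u (dirDeriv v (dirDeriv w (∑ i ∈ s, (l i : E → ℝ) * (m i : E → ℝ)))) = 0 := by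
  have c : ∀ i, ContDiff ℝ ∞ ((l i : E → ℝ) * (m i : E → ℝ)) :=
    fun i => (l i).contDiff.mul (m i).contDiff
  rw [dirDeriv_sum s c, dirDeriv_sum s (fun i => dirDeriv_contDiff (c i) w),
    dirDeriv_sum s (fun i => dirDeriv_contDiff (dirDeriv_contDiff (c i) w) v)]
  exact Finset.sum_eq_zero fun i _ => thirdDeriv_clm_mul_clm _ _ u v w

end dirDeriv

section contact

open scoped ContDiff

variable (n : ℕ) [NeZero n]

/-- The linear form `L = (2/3) ε₁ K₁₁₁ x₁ + 2 ε₁ Σ_{σ ≥ 2} K₁₁σ x_σ` that multiplies the last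
coordinate in the equation of the Moutard pencil. -/
noncomputable def moutardLin (ε : Fin n → ℝ) (K : Fin n → Fin n → Fin n → ℝ) :
    (Fin n → ℝ) →L[ℝ] ℝ :=
  ((2 / 3) * ε 0 * K 0 0 0) • ContinuousLinearMap.proj 0
    + (2 * ε 0) • ∑ σ ∈ Finset.univ.erase (0 : Fin n), K 0 0 σ • ContinuousLinearMap.proj σ

lemma moutardLin_zero (ε : Fin n → ℝ) (K : Fin n → Fin n → Fin n → ℝ) :
    moutardLin n ε K (stdBasis n 0) = (2 / 3) * ε 0 * K 0 0 0 := by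
  have h : ∑ σ ∈ Finset.univ.erase (0 : Fin n), K 0 0 σ * (Pi.single 0 1 : Fin n → ℝ) σ = 0 :=
    Finset.sum_eq_zero fun σ hσ => by simp [Finset.ne_of_mem_erase hσ]
  simp only [moutardLin, stdBasis, add_apply, smul_apply,
    sum_apply, ContinuousLinearMap.proj_apply, smul_eq_mul, h]
  simp

lemma moutardLin_ne (ε : Fin n → ℝ) (K : Fin n → Fin n → Fin n → ℝ) {σ : Fin n} (hσ : σ ≠ 0) :
    moutardLin n ε K (stdBasis n σ) = 2 * ε 0 * K 0 0 σ := by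
  have h : ∑ τ ∈ Finset.univ.erase (0 : Fin n), K 0 0 τ * (Pi.single σ 1 : Fin n → ℝ) τ
      = K 0 0 σ := by
    rw [Finset.sum_eq_single_of_mem σ (by simp [hσ]) (fun τ _ hτ => by simp [hτ])]
    simp
  simp only [moutardLin, stdBasis, add_apply, smul_apply,
    sum_apply, ContinuousLinearMap.proj_apply, smul_eq_mul, h]
  simp [hσ.symm]

/-- The third derivative of the contact function at the origin, for a function `f` that vanishes
to first order there. The right-hand side does not involve `β`. -/
lemma thirdDeriv_contact (ε : Fin n → ℝ) (K : Fin n → Fin n → Fin n → ℝ)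
    {f : (Fin n → ℝ) → ℝ} (hf : ContDiff ℝ ∞ f) (hf0 : f 0 = 0) (hdf : fderiv ℝ f 0 = 0)
    (β : ℝ) (u v w : Fin n → ℝ) :
    iteratedFDeriv ℝ 3 (fun x => moutardG n ε K β x (f x)) 0 ![u, v, w]
      = -iteratedFDeriv ℝ 3 f 0 ![u, v, w]
        + (moutardLin n ε K u * iteratedFDeriv ℝ 2 f 0 ![v, w]
          + moutardLin n ε K v * iteratedFDeriv ℝ 2 f 0 ![u, w]
          + moutardLin n ε K w * iteratedFDeriv ℝ 2 f 0 ![u, v]) := by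
  set L := moutardLin n ε K with hL
  let p : Fin n → (Fin n → ℝ) →L[ℝ] ℝ := fun σ => ContinuousLinearMap.proj σ
  let l : Fin n → (Fin n → ℝ) →L[ℝ] ℝ := fun σ => (1 / 2 * ε σ) • p σ
  let Q : (Fin n → ℝ) → ℝ := ∑ σ, (l σ : (Fin n → ℝ) → ℝ) * (p σ : (Fin n → ℝ) → ℝ)
  let a : (Fin n → ℝ) → ℝ := (L : (Fin n → ℝ) → ℝ) + (fun _ => β) * f
  have hφ : (fun x => moutardG n ε K β x (f x)) = -f + Q + a * f := by
    funext x
    have hQ : Q x = (1 / 2) * ∑ σ, ε σ * (x σ) ^ 2 := by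
      simp only [Q, l, p, Finset.sum_apply, Pi.mul_apply, smul_apply,
        ContinuousLinearMap.proj_apply, smul_eq_mul, Finset.mul_sum]
      exact Finset.sum_congr rfl fun σ _ => by ring
    have hLx : L x = (2 / 3) * ε 0 * K 0 0 0 * x 0
        + 2 * ε 0 * ∑ σ ∈ Finset.univ.erase (0 : Fin n), K 0 0 σ * x σ := by
      simp only [hL, moutardLin, add_apply, smul_apply,
        sum_apply, ContinuousLinearMap.proj_apply, smul_eq_mul]
    simp only [Pi.add_apply, Pi.neg_apply, Pi.mul_apply, hQ, a, hLx, moutardG]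
    ring
  have hQs : ContDiff ℝ ∞ Q := by
    have : Q = fun x => ∑ σ, l σ x * p σ x := by
      funext x
      simp [Q]
    rw [this]
    exact ContDiff.sum fun σ _ => (l σ).contDiff.mul (p σ).contDiff
  have hβf : ContDiff ℝ ∞ ((fun _ => β) * f) := contDiff_const.mul hf
  have has : ContDiff ℝ ∞ a := L.contDiff.add hβf
  have hafs : ContDiff ℝ ∞ (a * f) := has.mul hf
  have hfn : ContDiff ℝ ∞ (-f) := hf.neg
  have hnQ : ContDiff ℝ ∞ (-f + Q) := hfn.add hQs
  have hdf0 : ∀ z, dirDeriv z f 0 = 0 := fun z => by simp [dirDeriv, hdf]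
  have ha0 : a 0 = 0 := by simp [a, hf0]
  have hda : ∀ z, dirDeriv z a 0 = L z := fun z => by
    rw [dirDeriv_add L.contDiff hβf, dirDeriv_clm, dirDeriv_mul contDiff_const hf]
    simp [hdf0, hf0]
  have D := fun {h : (Fin n → ℝ) → ℝ} (hh : ContDiff ℝ ∞ h) z => dirDeriv_contDiff hh z
  rw [hφ, iteratedFDeriv_three_eq (contDiff_pi_add hnQ hafs), iteratedFDeriv_three_eq hf,
    iteratedFDeriv_two_eq hf, iteratedFDeriv_two_eq hf, iteratedFDeriv_two_eq hf,
    dirDeriv_add hnQ hafs, dirDeriv_add (D hnQ _) (D hafs _),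
    dirDeriv_add (D (D hnQ _) _) (D (D hafs _) _),
    dirDeriv_add hfn hQs, dirDeriv_add (D hfn _) (D hQs _),
    dirDeriv_add (D (D hfn _) _) (D (D hQs _) _),
    dirDeriv_neg, dirDeriv_neg, dirDeriv_neg, thirdDeriv_sum_clm_mul_clm]
  simp only [Pi.add_apply, Pi.neg_apply, thirdDeriv_mul has hf ha0 hf0 hdf0, hda,
    add_zero]

end contact

/-- the degree-3 Taylor coefficients of the contact function
`φ_β(x) = g_β(x, f(x))` at the origin: the coefficients of `x₁³` and of `x₁²x_σ` vanish,
the coefficient of `x₁x_σ²` is `b₁σσ = (ε₁ε_σ/3)K₁₁₁ − K₁σσ`, and the coefficient of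
`x₁x_σx_τ` (σ ≠ τ) is `−2K₁στ`. (The coefficient of the monomial `x^α` in the Taylor
expansion is `D^αφ/α!`.) In particular the 3-jet of `φ_β` has the form
`x₁·q(x₂,…,x_n) + p₃(x₂,…,x_n)` with `q` quadratic, independent of `β`. -/
theorem statement5 (n : ℕ) [NeZero n] (hn : 2 ≤ n)
    (ε : Fin n → ℝ) (hε : ∀ i, ε i = 1 ∨ ε i = -1)
    (K : Fin n → Fin n → Fin n → ℝ)
    (hKsym₁ : ∀ i j k, K i j k = K j i k)
    (hKsym₂ : ∀ i j k, K i j k = K i k j)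
    (H : Fin n → Fin n → Fin n → Fin n → ℝ)
    (hHsym₁ : ∀ i j k l, H i j k l = H j i k l)
    (hHsym₂ : ∀ i j k l, H i j k l = H i k j l)
    (hHsym₃ : ∀ i j k l, H i j k l = H i j l k)
    (f : (Fin n → ℝ) → ℝ)
    (hf : ContDiff ℝ (⊤ : ℕ∞) f) (hf0 : f 0 = 0) (hdf : fderiv ℝ f 0 = 0)
    (hf2 : ∀ i j, iteratedFDeriv ℝ 2 f 0 ![stdBasis n i, stdBasis n j]
      = if i = j then ε i else 0)
    (hf3 : ∀ i j k, iteratedFDeriv ℝ 3 f 0 ![stdBasis n i, stdBasis n j, stdBasis n k]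
      = 2 * K i j k)
    (hf4 : ∀ i j k l,
      iteratedFDeriv ℝ 4 f 0 ![stdBasis n i, stdBasis n j, stdBasis n k, stdBasis n l]
      = 2 * H i j k l)
    (β : ℝ) :
    iteratedFDeriv ℝ 3 (fun x => moutardG n ε K β x (f x)) 0
      ![stdBasis n 0, stdBasis n 0, stdBasis n 0] / 6 = 0 ∧
    (∀ σ : Fin n, σ ≠ 0 →
      iteratedFDeriv ℝ 3 (fun x => moutardG n ε K β x (f x)) 0
        ![stdBasis n 0, stdBasis n 0, stdBasis n σ] / 2 = 0) ∧
    (∀ σ : Fin n, σ ≠ 0 →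
      iteratedFDeriv ℝ 3 (fun x => moutardG n ε K β x (f x)) 0
        ![stdBasis n 0, stdBasis n σ, stdBasis n σ] / 2
        = (ε 0 * ε σ / 3) * K 0 0 0 - K 0 σ σ) ∧
    (∀ σ τ : Fin n, σ ≠ 0 → τ ≠ 0 → σ ≠ τ →
      iteratedFDeriv ℝ 3 (fun x => moutardG n ε K β x (f x)) 0
        ![stdBasis n 0, stdBasis n σ, stdBasis n τ] = -2 * K 0 σ τ) := by
  have key := thirdDeriv_contact n ε K hf hf0 hdf β
  have hε0 : ε 0 * ε 0 = 1 := by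
    rcases hε 0 with h | h <;> simp [h]
  refine ⟨?_, ?_, ?_, ?_⟩
  · rw [key, hf3, hf2, moutardLin_zero, if_pos rfl]
    linear_combination (1 / 3) * K 0 0 0 * hε0
  · intro σ hσ
    rw [key, hf3, hf2, hf2, moutardLin_zero, moutardLin_ne n ε K hσ, if_pos rfl, if_neg hσ.symm]
    linear_combination K 0 0 σ * hε0
  · intro σ hσ
    rw [key, hf3, hf2, hf2, moutardLin_zero, if_pos rfl, if_neg hσ.symm]
    ring
  · intro σ τ hσ hτ hστ
    rw [key, hf3, hf2, hf2, hf2, if_neg hστ, if_neg hσ.symm, if_neg hτ.symm]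
    ring
end

section
/- For every β ∈ ℝ, the coefficient of x_1⁴ in the Taylor expansion of the contact function φ_β(x) = g_β(x, f(x)) at the origin equals −(1/12)H_{1111} + (2/9)ε_1 K_{111}² + β/4. Consequently this coefficient vanishes if and only if β = β* = (1/9)(3H_{1111} − 8 ε_1 K_{111}²), i.e., if and only if Q(β) is the Moutard hyperquadric. -/
lemma iteratedDeriv_line {n : ℕ} {F : (Fin n → ℝ) → ℝ} (hF : ContDiff ℝ (⊤ : ℕ∞) F)
    (v : Fin n → ℝ) (k : ℕ) :
    iteratedDeriv k (fun t : ℝ => F (t • v)) 0 = iteratedFDeriv ℝ k F 0 (fun _ => v) := by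
  have h := ContinuousLinearMap.iteratedFDeriv_comp_right
    ((ContinuousLinearMap.id ℝ ℝ).smulRight v) hF (x := 0) (i := k) (by exact_mod_cast le_top)
  have hc : F ∘ ((ContinuousLinearMap.id ℝ ℝ).smulRight v) = fun t : ℝ => F (t • v) := by
    ext t; simp
  rw [hc] at h
  rw [iteratedDeriv_eq_iteratedFDeriv, h]
  simp

/-- The fourth derivative at `0` of the restricted contact function, for a one-variable `h`
with a critical zero at `0`. -/
lemma iteratedDeriv_four_contact {h : ℝ → ℝ} (hh : ContDiff ℝ (⊤ : ℕ∞) h) (a c β : ℝ)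
    (h0 : h 0 = 0) (h1 : iteratedDeriv 1 h 0 = 0) :
    iteratedDeriv 4 (fun t => -h t + a * t ^ 2 + c * (t * h t) + β * (h t * h t)) 0
      = -iteratedDeriv 4 h 0 + 4 * c * iteratedDeriv 3 h 0
        + 6 * β * iteratedDeriv 2 h 0 ^ 2 := by
  have hh4 : ContDiffAt ℝ (4 : ℕ) h 0 := (contDiff_infty.mp hh 4).contDiffAt
  have hid : ContDiffAt ℝ (4 : ℕ) (fun t : ℝ => t) 0 := contDiffAt_id
  have e1 : ContDiffAt ℝ (4 : ℕ) (fun t => -h t) 0 := hh4.neg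
  have e2 : ContDiffAt ℝ (4 : ℕ) (fun t : ℝ => a * t ^ 2) 0 := by fun_prop
  have e3' : ContDiffAt ℝ (4 : ℕ) (fun t : ℝ => t * h t) 0 := hid.mul hh4
  have e4' : ContDiffAt ℝ (4 : ℕ) (fun t : ℝ => h t * h t) 0 := hh4.mul hh4
  have e3 : ContDiffAt ℝ (4 : ℕ) (fun t : ℝ => c * (t * h t)) 0 := contDiffAt_const.mul e3'
  have e4 : ContDiffAt ℝ (4 : ℕ) (fun t : ℝ => β * (h t * h t)) 0 := contDiffAt_const.mul e4'
  rw [iteratedDeriv_fun_add ((e1.add e2).add e3) e4, iteratedDeriv_fun_add (e1.add e2) e3,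
    iteratedDeriv_fun_add e1 e2, iteratedDeriv_const_mul_field, iteratedDeriv_const_mul_field,
    iteratedDeriv_const_mul_field, iteratedDeriv_fun_mul hid hh4, iteratedDeriv_fun_mul hh4 hh4,
    iteratedDeriv_fun_neg]
  have h2 : iteratedDeriv 4 (fun t : ℝ => t ^ 2) 0 = 0 := by simp
  simp only [Finset.sum_range_succ, Finset.sum_range_zero, iteratedDeriv_fun_id_zero, h2,
    iteratedDeriv_zero, h0, h1]
  norm_num [Nat.choose, h1, h0]
  ring

/-- the coefficient of `x₁⁴` in the Taylor expansion of the contact function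
`φ_β(x) = g_β(x, f(x))` at the origin equals `−H₁₁₁₁/12 + (2/9)ε₁K₁₁₁² + β/4`, and it
vanishes iff `β = β* = (1/9)(3H₁₁₁₁ − 8ε₁K₁₁₁²)`, i.e. iff `Q(β)` is the Moutard
hyperquadric. -/
theorem statement6 (n : ℕ) [NeZero n] (hn : 2 ≤ n)
    (ε : Fin n → ℝ) (hε : ∀ i, ε i = 1 ∨ ε i = -1)
    (K : Fin n → Fin n → Fin n → ℝ)
    (hKsym₁ : ∀ i j k, K i j k = K j i k)
    (hKsym₂ : ∀ i j k, K i j k = K i k j)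
    (H : Fin n → Fin n → Fin n → Fin n → ℝ)
    (hHsym₁ : ∀ i j k l, H i j k l = H j i k l)
    (hHsym₂ : ∀ i j k l, H i j k l = H i k j l)
    (hHsym₃ : ∀ i j k l, H i j k l = H i j l k)
    (f : (Fin n → ℝ) → ℝ)
    (hf : ContDiff ℝ (⊤ : ℕ∞) f) (hf0 : f 0 = 0) (hdf : fderiv ℝ f 0 = 0)
    (hf2 : ∀ i j, iteratedFDeriv ℝ 2 f 0 ![stdBasis n i, stdBasis n j]
      = if i = j then ε i else 0)
    (hf3 : ∀ i j k, iteratedFDeriv ℝ 3 f 0 ![stdBasis n i, stdBasis n j, stdBasis n k]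
      = 2 * K i j k)
    (hf4 : ∀ i j k l,
      iteratedFDeriv ℝ 4 f 0 ![stdBasis n i, stdBasis n j, stdBasis n k, stdBasis n l]
      = 2 * H i j k l)
    (β : ℝ) :
    iteratedFDeriv ℝ 4 (fun x => moutardG n ε K β x (f x)) 0
      ![stdBasis n 0, stdBasis n 0, stdBasis n 0, stdBasis n 0] / 24
      = -(1 / 12) * H 0 0 0 0 + (2 / 9) * ε 0 * (K 0 0 0) ^ 2 + β / 4 ∧
    (iteratedFDeriv ℝ 4 (fun x => moutardG n ε K β x (f x)) 0
      ![stdBasis n 0, stdBasis n 0, stdBasis n 0, stdBasis n 0] / 24 = 0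
      ↔ β = (1 / 9) * (3 * H 0 0 0 0 - 8 * ε 0 * (K 0 0 0) ^ 2)) := by
  have hcoef : iteratedFDeriv ℝ 4 (fun x => moutardG n ε K β x (f x)) 0
      ![stdBasis n 0, stdBasis n 0, stdBasis n 0, stdBasis n 0] / 24
      = -(1 / 12) * H 0 0 0 0 + (2 / 9) * ε 0 * (K 0 0 0) ^ 2 + β / 4 := by
    have hφ : ContDiff ℝ (⊤ : ℕ∞) (fun x => moutardG n ε K β x (f x)) := by
      unfold moutardG
      fun_prop
    have v2 : (![stdBasis n 0, stdBasis n 0] : Fin 2 → Fin n → ℝ) = fun _ => stdBasis n 0 := by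
      ext i : 1; fin_cases i <;> rfl
    have v3 : (![stdBasis n 0, stdBasis n 0, stdBasis n 0] : Fin 3 → Fin n → ℝ)
        = fun _ => stdBasis n 0 := by
      ext i : 1; fin_cases i <;> rfl
    have v4 : (![stdBasis n 0, stdBasis n 0, stdBasis n 0, stdBasis n 0] : Fin 4 → Fin n → ℝ)
        = fun _ => stdBasis n 0 := by
      ext i : 1; fin_cases i <;> rfl
    have d1 : iteratedDeriv 1 (fun t : ℝ => f (t • stdBasis n 0)) 0 = 0 := by
      rw [iteratedDeriv_line hf, iteratedFDeriv_one_apply, hdf]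
      rfl
    have d2 : iteratedDeriv 2 (fun t : ℝ => f (t • stdBasis n 0)) 0 = ε 0 := by
      rw [iteratedDeriv_line hf, ← v2, hf2, if_pos rfl]
    have d3 : iteratedDeriv 3 (fun t : ℝ => f (t • stdBasis n 0)) 0 = 2 * K 0 0 0 := by
      rw [iteratedDeriv_line hf, ← v3, hf3]
    have d4 : iteratedDeriv 4 (fun t : ℝ => f (t • stdBasis n 0)) 0 = 2 * H 0 0 0 0 := by
      rw [iteratedDeriv_line hf, ← v4, hf4]
    have hline : (fun t : ℝ => moutardG n ε K β (t • stdBasis n 0) (f (t • stdBasis n 0)))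
        = fun t : ℝ => -f (t • stdBasis n 0) + (1 / 2 * ε 0) * t ^ 2
          + (2 / 3 * ε 0 * K 0 0 0) * (t * f (t • stdBasis n 0))
          + β * (f (t • stdBasis n 0) * f (t • stdBasis n 0)) := by
      ext t
      have s1 : ∑ σ, ε σ * ((t • stdBasis n 0) σ) ^ 2 = ε 0 * t ^ 2 := by
        rw [Finset.sum_eq_single 0] <;> simp +contextual [stdBasis]
      have s2 : ∑ σ ∈ Finset.univ.erase (0 : Fin n), K 0 0 σ * (t • stdBasis n 0) σ = 0 :=
        Finset.sum_eq_zero fun σ hσ => by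
          simp [stdBasis, Finset.ne_of_mem_erase hσ]
      have s3 : (t • stdBasis n 0) 0 = t := by simp [stdBasis]
      rw [moutardG, s1, s2, s3]
      ring
    have hsm : ContDiff ℝ (⊤ : ℕ∞) (fun t : ℝ => f (t • stdBasis n 0)) := by fun_prop
    rw [v4, ← iteratedDeriv_line hφ, hline,
      iteratedDeriv_four_contact hsm _ _ _ (by simpa using hf0) d1, d2, d3, d4]
    have hsq : ε 0 ^ 2 = 1 := by
      rcases hε 0 with h | h <;> rw [h] <;> norm_num
    rw [hsq]
    ring
  refine ⟨hcoef, ?_⟩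
  rw [hcoef]
  constructor <;> intro h <;> linarith
end

section
/- Let n ≥ 2, let ε_1,…,ε_n ∈ {−1,1}, and let K_{111} and K_{1σσ} (σ = 2,…,n) be real numbers. Define b_{1σσ} = (ε_1 ε_σ/3) K_{111} − K_{1σσ} for σ = 2,…,n, and C_{1σσ} = (2(n+1)/(n+2)) K_{1σσ} − (2 ε_1 ε_σ/(n+2)) K_{111} − (2 ε_σ/(n+2)) Σ_{ρ≥2, ρ≠σ} ε_ρ K_{1ρρ} for σ = 2,…,n. Then b_{1σσ} = 0 for all σ ∈ {2,…,n} if and only if C_{1σσ} = 0 for all σ ∈ {2,…,n}. -/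
/-!
Put `x σ = ε_σ K₁σσ`, `a = ε₁ K₁₁₁` and `S = ∑_{σ ≥ 2} x σ`. Multiplying by the unit `ε_σ`,
the equation `b₁σσ = 0` becomes `x σ = a / 3`, and `C₁σσ = 0` becomes `(n + 2) x σ = a + S`.
If all `x σ = a / 3` then `S = (n - 1) a / 3`, so `a + S = (n + 2) a / 3`. Conversely, summing
the second system over the `n - 1` indices gives `(n + 2) S = (n - 1) (a + S)`, hence
`3 S = (n - 1) a` and again `a + S = (n + 2) a / 3`.
-/

/-- The equivalence in the normalized unknowns `x σ = ε_σ K₁σσ`. -/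
lemma forall_eq_third_iff (n : ℕ) [NeZero n] (a : ℝ) (x : Fin n → ℝ) :
    (∀ σ : Fin n, σ ≠ 0 → x σ = a / 3) ↔
    (∀ σ : Fin n, σ ≠ 0 →
      ((n : ℝ) + 2) * x σ = a + ∑ ρ ∈ Finset.univ.erase (0 : Fin n), x ρ) := by
  have hcard : (((Finset.univ.erase (0 : Fin n)).card : ℕ) : ℝ) = (n : ℝ) - 1 := by
    rw [Finset.card_erase_of_mem (Finset.mem_univ _), Finset.card_univ, Fintype.card_fin,
      Nat.cast_sub (NeZero.one_le), Nat.cast_one]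
  have hn2 : (n : ℝ) + 2 ≠ 0 := by positivity
  constructor
  · intro h σ hσ
    have hS : ∑ ρ ∈ Finset.univ.erase (0 : Fin n), x ρ = ((n : ℝ) - 1) * (a / 3) := by
      rw [Finset.sum_congr rfl (fun ρ hρ => h ρ (Finset.ne_of_mem_erase hρ)),
        Finset.sum_const, nsmul_eq_mul, hcard]
    rw [hS, h σ hσ]
    ring
  · intro h σ hσ
    have hS := Finset.sum_congr (rfl : Finset.univ.erase (0 : Fin n) = _)
      (fun ρ hρ => h ρ (Finset.ne_of_mem_erase hρ))
    rw [← Finset.mul_sum, Finset.sum_const, nsmul_eq_mul, hcard] at hS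
    have h1 := h σ hσ
    apply mul_left_cancel₀ hn2
    linear_combination h1 + hS / 3

/-- with `b₁σσ = (ε₁ε_σ/3)K₁₁₁ − K₁σσ` and
`C₁σσ = (2(n+1)/(n+2))K₁σσ − (2ε₁ε_σ/(n+2))K₁₁₁ − (2ε_σ/(n+2))Σ_{ρ≥2,ρ≠σ} ε_ρK₁ρρ`,
the system `b₁σσ = 0` (σ = 2,…,n) is equivalent to the system `C₁σσ = 0` (σ = 2,…,n).
Here the index `0 : Fin n` plays the role of the index `1` and `K1d σ` denotes `K₁σσ`. -/
theorem statement9 (n : ℕ) [NeZero n] (hn : 2 ≤ n)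
    (ε : Fin n → ℝ) (hε : ∀ i, ε i = 1 ∨ ε i = -1)
    (K111 : ℝ) (K1d : Fin n → ℝ) :
    (∀ σ : Fin n, σ ≠ 0 → (ε 0 * ε σ / 3) * K111 - K1d σ = 0) ↔
    (∀ σ : Fin n, σ ≠ 0 →
      (2 * ((n : ℝ) + 1) / ((n : ℝ) + 2)) * K1d σ
        - (2 * ε 0 * ε σ / ((n : ℝ) + 2)) * K111
        - (2 * ε σ / ((n : ℝ) + 2)) *
            ∑ ρ ∈ (Finset.univ.erase (0 : Fin n)).erase σ, ε ρ * K1d ρ = 0) := by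
  have hsq : ∀ i, ε i * ε i = 1 := fun i => by
    rcases hε i with h | h <;> rw [h] <;> norm_num
  have hn2 : (n : ℝ) + 2 ≠ 0 := by positivity
  have key := forall_eq_third_iff n (ε 0 * K111) (fun σ => ε σ * K1d σ)
  have hb : ∀ σ : Fin n, (ε 0 * ε σ / 3) * K111 - K1d σ = 0 ↔
      ε σ * K1d σ = ε 0 * K111 / 3 := fun σ => by
    constructor
    · intro h
      linear_combination (-ε σ) * h + (ε 0 * K111 / 3) * hsq σ
    · intro h
      linear_combination (-ε σ) * h + K1d σ * hsq σ
  have hC : ∀ σ : Fin n, σ ≠ 0 →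
      ((2 * ((n : ℝ) + 1) / ((n : ℝ) + 2)) * K1d σ
        - (2 * ε 0 * ε σ / ((n : ℝ) + 2)) * K111
        - (2 * ε σ / ((n : ℝ) + 2)) *
            ∑ ρ ∈ (Finset.univ.erase (0 : Fin n)).erase σ, ε ρ * K1d ρ = 0 ↔
      ((n : ℝ) + 2) * (ε σ * K1d σ) =
        ε 0 * K111 + ∑ ρ ∈ Finset.univ.erase (0 : Fin n), ε ρ * K1d ρ) := fun σ hσ => by
    have hmem : σ ∈ Finset.univ.erase (0 : Fin n) := by simp [hσ]
    rw [← Finset.add_sum_erase _ (fun ρ => ε ρ * K1d ρ) hmem]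
    generalize ∑ ρ ∈ (Finset.univ.erase (0 : Fin n)).erase σ, ε ρ * K1d ρ = T
    -- Clearing the denominator and using `ε_σ² = 1` exposes the factor `2 ε_σ / (n + 2)`.
    have hfac : (2 * ((n : ℝ) + 1) / ((n : ℝ) + 2)) * K1d σ
        - (2 * ε 0 * ε σ / ((n : ℝ) + 2)) * K111 - (2 * ε σ / ((n : ℝ) + 2)) * T =
        (2 * ε σ / ((n : ℝ) + 2)) *
          (((n : ℝ) + 2) * (ε σ * K1d σ) - (ε 0 * K111 + (ε σ * K1d σ + T))) := by
      linear_combination (-2 * ((n : ℝ) + 1) / ((n : ℝ) + 2) * K1d σ) * hsq σ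
    have hεσ : ε σ ≠ 0 := left_ne_zero_of_mul_eq_one (hsq σ)
    have hne : 2 * ε σ / ((n : ℝ) + 2) ≠ 0 := div_ne_zero (mul_ne_zero two_ne_zero hεσ) hn2
    rw [hfac, mul_eq_zero, or_iff_right hne, sub_eq_zero]
  rw [forall₂_congr hC, forall_congr' fun σ => imp_congr_right fun _ => hb σ]
  exact key
end

section
/- Let n ≥ 2, let ε_1,…,ε_n ∈ {−1,1}, and let K_{1στ} (1 ≤ σ,τ ≤ n) be real numbers symmetric in σ,τ, with K_{111} also given. Define b_{1σσ} = (ε_1 ε_σ/3) K_{111} − K_{1σσ} and, for 2 ≤ σ ≠ τ ≤ n, b_{1στ} = −2 K_{1στ}; define C_{1σσ} = (2(n+1)/(n+2)) K_{1σσ} − (2 ε_1 ε_σ/(n+2)) K_{111} − (2 ε_σ/(n+2)) Σ_{ρ≥2, ρ≠σ} ε_ρ K_{1ρρ}, and C_{1στ} = 2 K_{1στ} for 2 ≤ σ ≠ τ ≤ n. Then b_{1στ} = 0 for all 2 ≤ σ, τ ≤ n (including σ = τ) if and only if C_{1στ} = 0 for all 2 ≤ σ, τ ≤ n. -/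
/-!
Put `x σ = ε_σ K₁σσ` and `a = ε₁ K₁₁₁`. The off-diagonal equations of both systems say `K₁στ = 0`.
Since `ε_σ² = 1`, the diagonal equations become `x σ = a / 3` and `(n + 2) x σ = a + S` respectively,
where `S` is the sum of `x` over the `n - 1` nonzero indices. Summing the second family gives
`(n + 2) S = (n - 1) (a + S)`, i.e. `3 S = (n - 1) a`, hence `3 (a + S) = (n + 2) a` and
`x σ = a / 3`; the converse is direct (`diagonal_system_iff`).
-/

/-- The linear system `(n + 2) x σ = a + ∑ x`, indexed by a finite set with `n - 1` elements, has
the unique solution `x σ = a / 3`. -/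
lemma diagonal_system_iff {ι : Type*} (s : Finset ι) (n a : ℝ) (hn : 0 < n)
    (hs : (s.card : ℝ) = n - 1) (x : ι → ℝ) :
    (∀ σ ∈ s, x σ = a / 3) ↔ ∀ σ ∈ s, (n + 2) * x σ = a + ∑ ρ ∈ s, x ρ := by
  constructor
  · intro h σ hσ
    rw [Finset.sum_congr rfl h, h σ hσ, Finset.sum_const, nsmul_eq_mul, hs]
    ring
  · intro h σ hσ
    have hsum : (n + 2) * ∑ ρ ∈ s, x ρ = (n - 1) * (a + ∑ ρ ∈ s, x ρ) := by
      rw [Finset.mul_sum, Finset.sum_congr rfl h, Finset.sum_const, nsmul_eq_mul, hs]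
    have hx := h σ hσ
    have hprod : (n + 2) * (x σ - a / 3) = 0 := by linarith
    have hpos : n + 2 ≠ 0 := by positivity
    have := (mul_eq_zero.mp hprod).resolve_left hpos
    linarith

/-- with `b₁σσ = (ε₁ε_σ/3)K₁₁₁ − K₁σσ`, `b₁στ = −2K₁στ` (σ ≠ τ),
`C₁σσ = (2(n+1)/(n+2))K₁σσ − (2ε₁ε_σ/(n+2))K₁₁₁ − (2ε_σ/(n+2))Σ_{ρ≥2,ρ≠σ} ε_ρK₁ρρ`, and
`C₁στ = 2K₁στ` (σ ≠ τ), the system `b₁στ = 0` (2 ≤ σ, τ ≤ n) is equivalent to the system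
`C₁στ = 0` (2 ≤ σ, τ ≤ n). Here the index `0 : Fin n` plays the role of the index `1`, and
`K σ τ` denotes `K₁στ` (so `K 0 0 = K₁₁₁`). -/
theorem statement10 (n : ℕ) [NeZero n] (hn : 2 ≤ n)
    (ε : Fin n → ℝ) (hε : ∀ i, ε i = 1 ∨ ε i = -1)
    (K : Fin n → Fin n → ℝ) (hKsym : ∀ σ τ, K σ τ = K τ σ) :
    (∀ σ τ : Fin n, σ ≠ 0 → τ ≠ 0 →
      (if σ = τ then (ε 0 * ε σ / 3) * K 0 0 - K σ σ else -2 * K σ τ) = 0) ↔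
    (∀ σ τ : Fin n, σ ≠ 0 → τ ≠ 0 →
      (if σ = τ then
        (2 * ((n : ℝ) + 1) / ((n : ℝ) + 2)) * K σ σ
          - (2 * ε 0 * ε σ / ((n : ℝ) + 2)) * K 0 0
          - (2 * ε σ / ((n : ℝ) + 2)) *
              ∑ ρ ∈ (Finset.univ.erase (0 : Fin n)).erase σ, ε ρ * K ρ ρ
      else 2 * K σ τ) = 0) := by
  have hnpos : (0 : ℝ) < n := by
    have : 0 < n := by omega
    exact_mod_cast this
  have hn2 : (n : ℝ) + 2 ≠ 0 := by positivity
  have hsq : ∀ i, ε i * ε i = 1 := fun i => by rcases hε i with h | h <;> simp [h]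
  have hne : ∀ i, ε i ≠ 0 := fun i h => by simpa [h] using hsq i
  have hcard : (((Finset.univ.erase (0 : Fin n)).card : ℕ) : ℝ) = n - 1 := by
    rw [Finset.card_erase_of_mem (Finset.mem_univ _), Finset.card_univ, Fintype.card_fin,
      Nat.cast_sub (by omega), Nat.cast_one]
  have key := diagonal_system_iff (Finset.univ.erase (0 : Fin n)) n (ε 0 * K 0 0) hnpos hcard
    (fun σ => ε σ * K σ σ)
  have hb : ∀ σ, (ε 0 * ε σ / 3) * K 0 0 - K σ σ = 0 ↔ ε σ * K σ σ = ε 0 * K 0 0 / 3 := by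
    intro σ
    constructor
    · intro h
      linear_combination (-ε σ) * h + (ε 0 * K 0 0 / 3) * hsq σ
    · intro h
      linear_combination (-ε σ) * h + K σ σ * hsq σ
  have hC : ∀ σ : Fin n, σ ≠ 0 →
      ((2 * ((n : ℝ) + 1) / ((n : ℝ) + 2)) * K σ σ
          - (2 * ε 0 * ε σ / ((n : ℝ) + 2)) * K 0 0
          - (2 * ε σ / ((n : ℝ) + 2)) *
              ∑ ρ ∈ (Finset.univ.erase (0 : Fin n)).erase σ, ε ρ * K ρ ρ = 0 ↔
        ((n : ℝ) + 2) * (ε σ * K σ σ) =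
          ε 0 * K 0 0 + ∑ ρ ∈ Finset.univ.erase (0 : Fin n), ε ρ * K ρ ρ) := by
    intro σ hσ
    rw [← Finset.add_sum_erase _ (fun ρ => ε ρ * K ρ ρ)
      (Finset.mem_erase.mpr ⟨hσ, Finset.mem_univ σ⟩)]
    generalize ∑ ρ ∈ (Finset.univ.erase (0 : Fin n)).erase σ, ε ρ * K ρ ρ = T
    -- Up to the nonzero factor `2 ε_σ / (n + 2)`, the two equations coincide because `ε_σ² = 1`.
    have hfac : (2 * ((n : ℝ) + 1) / ((n : ℝ) + 2)) * K σ σ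
          - (2 * ε 0 * ε σ / ((n : ℝ) + 2)) * K 0 0 - (2 * ε σ / ((n : ℝ) + 2)) * T
        = (2 * ε σ / ((n : ℝ) + 2)) *
          (((n : ℝ) + 2) * (ε σ * K σ σ) - (ε 0 * K 0 0 + (ε σ * K σ σ + T))) := by
      linear_combination (-(2 * ((n : ℝ) + 1) / ((n : ℝ) + 2)) * K σ σ) * hsq σ
    rw [hfac, mul_eq_zero, or_iff_right (div_ne_zero (mul_ne_zero two_ne_zero (hne σ)) hn2),
      sub_eq_zero]
  simp only [Finset.mem_erase, Finset.mem_univ, and_true] at key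
  constructor
  · intro h σ τ hσ hτ
    split_ifs with hστ
    · refine (hC σ hσ).mpr (key.mp (fun ρ hρ => (hb ρ).mp ?_) σ hσ)
      simpa using h ρ ρ hρ hρ
    · have := h σ τ hσ hτ
      rw [if_neg hστ] at this
      linarith
  · intro h σ τ hσ hτ
    split_ifs with hστ
    · refine (hb σ).mpr (key.mpr (fun ρ hρ => (hC ρ hρ).mp ?_) σ hσ)
      have := h ρ ρ hρ hρ
      rwa [if_pos rfl] at this
    · have := h σ τ hσ hτ
      rw [if_neg hστ] at this
      linarith
end
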